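/- Let k be a number field, let k_v be the completion of k at a nonarchimedean place v, and let A be a k-definable subset of k_v^n. Then A is a finite union of finite intersections of simple subsets of k_v^n, where a simple subset is one of the form {x ∈ k_v^n : f(x) = 0} or {x ∈ k_v^n : f(x) ∈ k_v^{×m}} for some f ∈ k[x₁,…,x_n] and m ∈ ℤ_{>0}. -/

import Mathlib

open FirstOrder IsDedekindDomain

/-- A subset of `k_v^n` is *simple* if it is of the form `{x : f(x) = 0}` or
`{x : f(x) ∈ k_v^{×m}}` for some `f ∈ k[x₁,…,x_n]` and `m ∈ ℤ_{>0}`. -/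
def IsSimpleSubset (k : Type*) [Field k] [NumberField k]
    (v : HeightOneSpectrum (NumberField.RingOfIntegers k)) (n : ℕ)
    (B : Set (Fin n → v.adicCompletion k)) : Prop :=
  (∃ f : MvPolynomial (Fin n) k,
      B = {x : Fin n → v.adicCompletion k | MvPolynomial.aeval x f = 0}) ∨
  (∃ (f : MvPolynomial (Fin n) k) (m : ℕ), 0 < m ∧
      B = {x : Fin n → v.adicCompletion k |
        ∃ b : v.adicCompletion k, b ≠ 0 ∧ b ^ m = MvPolynomial.aeval x f})

/-!
The subsets of `K ^ ι` generated by the conditions `f(x) ∈ K^{×n}` form a Boolean algebra, because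
`K^{×n}` has finite index in `Kˣ` with representatives in `k`. It remains to see that it is closed
under projections. By compactness this becomes a question about two generic points, with
coordinates in ultrapowers `L` and `L'` of `K`, at which the same polynomials are nonzero powers:
given any further `t` in `L`, finitely many power conditions on polynomials in `t` must be realised
by some `t'` in `L'`.

Nonzero powers know the valuation, since `|x| ≤ 1` if and only if `1 + π x ^ q` is a `q`-th power.
A maximal `k`-algebra `S ⊆ L × L'` whose projections have the same nonzero powers is a field, and
roots in `L` of polynomials over `S` can be matched in `L'`. If `S` contains all of them of lower
degree, then either some `c ∈ S` approximates `t` so well that `g(t)` and `g(c)` differ by a power,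
by Hensel's lemma, or the terms of the expansion of `g` at a best approximation `c ∈ S` have
distinct values, so that a single term determines the coset of `g(t)`.
-/

open Polynomial

section GaussNorm

variable {L Γ : Type*} [Field L] [LinearOrderedCommGroupWithZero Γ] {v : Valuation L Γ}
  {c c' : L} {ρ ρ' B B' : Γ} {g g' : L[X]}

/-- The Gauss norm of `g` on the disc with centre `c` and radius `ρ` is at most `B`. -/
def GaussNormLE (v : Valuation L Γ) (c : L) (ρ : Γ) (g : L[X]) (B : Γ) : Prop :=
  ∀ l, v ((taylor c g).coeff l) * ρ ^ l ≤ B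

namespace GaussNormLE

theorem mono (h : GaussNormLE v c ρ g B) (hB : B ≤ B') : GaussNormLE v c ρ g B' := fun l =>
  (h l).trans hB

theorem derivative_mul_le (h : GaussNormLE v c ρ g B) : v (g.derivative.eval c) * ρ ≤ B := by
  simpa using h 1

theorem const (c a : L) (ρ : Γ) : GaussNormLE v c ρ (C a) (v a) := fun l => by
  rcases eq_or_ne l 0 with rfl | hl <;> simp [coeff_C, *]

theorem X_sub_C (hc : v (c' - c) ≤ ρ) (hρ : ρ' ≤ ρ) : GaussNormLE v c' ρ' (X - C c) ρ := fun l => by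
  match l with
  | 0 => simpa using hc
  | 1 => simpa [coeff_C] using hρ
  | l + 2 => simp [coeff_X]

theorem mul (h : GaussNormLE v c ρ g B) (h' : GaussNormLE v c ρ g' B') :
    GaussNormLE v c ρ (g * g') (B * B') := fun l => by
  rcases (zero_le (a := ρ ^ l)).eq_or_lt with hρ | hρ
  · simp [← hρ]
  rw [taylor_mul, coeff_mul, ← le_div_iff₀ hρ]
  refine v.map_sum_le fun ij hij => ?_
  rw [le_div_iff₀ hρ, map_mul, ← Finset.HasAntidiagonal.mem_antidiagonal.1 hij, pow_add,
    mul_mul_mul_comm]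
  exact mul_le_mul' (h _) (h' _)

theorem pow (h : GaussNormLE v c ρ g B) (m : ℕ) : GaussNormLE v c ρ (g ^ m) (B ^ m) := by
  induction m with
  | zero => simpa using const (v := v) c 1 ρ
  | succ m ih => simpa only [pow_succ] using ih.mul h

theorem add (h : GaussNormLE v c ρ g B) (h' : GaussNormLE v c ρ g' B) :
    GaussNormLE v c ρ (g + g') B := fun l => by
  rw [map_add, coeff_add]
  exact (mul_le_mul_left (v.map_add _ _) _).trans
    ((max_mul _ _ _).trans_le (max_le (h l) (h' l)))

theorem sum {ι : Type*} {s : Finset ι} {f : ι → L[X]} (h : ∀ i ∈ s, GaussNormLE v c ρ (f i) B) :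
    GaussNormLE v c ρ (∑ i ∈ s, f i) B := fun l => by
  rcases (zero_le (a := ρ ^ l)).eq_or_lt with hρ | hρ
  · simp [← hρ]
  rw [map_sum, finsetSum_coeff, ← le_div_iff₀ hρ]
  exact v.map_sum_le fun i hi => (le_div_iff₀ hρ).2 (h i hi l)

theorem recenter (h : GaussNormLE v c ρ g B) (hc : v (c' - c) ≤ ρ) (hρ : ρ' ≤ ρ) :
    GaussNormLE v c' ρ' g B := by
  rw [← sum_taylor_eq g c]
  exact sum fun l _ => ((const _ _ _).mul ((X_sub_C hc hρ).pow l)).mono (h l)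

theorem eval_sub_le (h : GaussNormLE v c ρ g B) {x : L} {ε : Γ} (hx : v (x - c) ≤ ρ * ε)
    (hε : ε ≤ 1) : v (g.eval x - g.eval c) ≤ B * ε := by
  have hsum : g.eval x - g.eval c = ∑ l ∈ Finset.range (taylor c g).natDegree,
      (taylor c g).coeff (l + 1) * (x - c) ^ (l + 1) := by
    rw [← taylor_eval_sub c, eval_eq_sum_range, Finset.sum_range_succ', taylor_coeff_zero,
      pow_zero, mul_one, add_sub_cancel_right]
  rw [hsum]
  refine v.map_sum_le fun l _ => ?_
  calc v ((taylor c g).coeff (l + 1) * (x - c) ^ (l + 1))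
      ≤ v ((taylor c g).coeff (l + 1)) * (ρ * ε) ^ (l + 1) := by rw [map_mul, map_pow]; gcongr
    _ = v ((taylor c g).coeff (l + 1)) * ρ ^ (l + 1) * ε ^ (l + 1) := by rw [mul_pow, mul_assoc]
    _ ≤ B * ε := by
      gcongr
      · exact h _
      · exact pow_le_of_le_one zero_le hε l.succ_ne_zero

theorem eval_eq_or_eval_sub_lt (h : GaussNormLE v c ρ g B) {x : L} {ε : Γ}
    (hx : v (x - c) < ρ * ε) (hε : ε ≤ 1) :
    g.eval x = g.eval c ∨ v (g.eval x - g.eval c) < B * ε := by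
  have hρ : 0 < ρ := zero_lt_iff.2 (left_ne_zero_of_mul (zero_le.trans_lt hx).ne')
  rcases (zero_le (a := B)).eq_or_lt with hB | hB
  · refine .inl (sub_eq_zero.1 (v.zero_iff.1 (le_zero_iff.1 ?_)))
    simpa [← hB] using h.eval_sub_le hx.le hε
  · have hlt : v (x - c) / ρ < ε := (div_lt_iff₀' hρ).2 hx
    refine .inr ((h.eval_sub_le (mul_div_cancel₀ _ hρ.ne').ge (hlt.le.trans hε)).trans_lt ?_)
    exact mul_lt_mul_of_pos_left hlt hB

theorem eq_zero (h : GaussNormLE v c ρ g 0) (hρ : ρ ≠ 0) : g = 0 := by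
  refine (taylor_eq_zero c g).1 (ext fun l => ?_)
  simpa [hρ] using h l

theorem of_derivative {d : ℕ} (h : GaussNormLE v c ρ g.derivative B) (hd : g.natDegree ≤ d)
    (hd₀ : (d.factorial : L) ≠ 0) :
    GaussNormLE v c ρ (g - C (g.eval c)) (B * ρ / v (d.factorial : L)) := fun l => by
  rw [map_sub, taylor_C, coeff_sub, coeff_C]
  rcases l with _ | l
  · simp
  rw [if_neg l.succ_ne_zero, sub_zero, le_div_iff₀ (v.pos_iff.2 hd₀)]
  rcases lt_or_ge g.natDegree (l + 1) with hl | hl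
  · simp [coeff_eq_zero_of_natDegree_lt ((natDegree_taylor g c).trans_lt hl)]
  obtain ⟨e, he⟩ := Nat.dvd_factorial l.succ_pos (hl.trans hd)
  have hfac : v (d.factorial : L) ≤ v ((l + 1 : ℕ) : L) := by
    rw [he, Nat.cast_mul, map_mul]
    exact mul_le_of_le_one_right' (natCast_mem v.integer e)
  have hcoeff : (taylor c g.derivative).coeff l =
      (taylor c g).coeff (l + 1) * ((l + 1 : ℕ) : L) := by
    rw [Nat.cast_succ, ← coeff_derivative, taylor_apply, taylor_apply, derivative_comp]
    simp
  calc v ((taylor c g).coeff (l + 1)) * ρ ^ (l + 1) * v (d.factorial : L)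
      ≤ v ((taylor c g).coeff (l + 1)) * ρ ^ (l + 1) * v ((l + 1 : ℕ) : L) := by gcongr
    _ = v ((taylor c g.derivative).coeff l) * ρ ^ l * ρ := by
      rw [hcoeff, map_mul, pow_succ]; ac_rfl
    _ ≤ B * ρ := by gcongr; exact h l

theorem add_const (h : GaussNormLE v c ρ (g - C (g.eval c)) B) (hc : v (g.eval c) ≤ B) :
    GaussNormLE v c ρ g B := by
  simpa using h.add ((const (v := v) c (g.eval c) ρ).mono hc)

theorem of_isEquiv {Γ' : Type*} [LinearOrderedCommGroupWithZero Γ'] {v' : Valuation L Γ'}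
    (hv : v.IsEquiv v') {s b : L} (h : GaussNormLE v c (v s) g (v b)) :
    GaussNormLE v' c (v' s) g (v' b) := fun l => by
  simpa using (hv ((taylor c g).coeff l * s ^ l) b).1 (by simpa using h l)

theorem comap_iff {S : Type*} [Field S] (f : S →+* L) {c : S} {g : S[X]} :
    GaussNormLE (v.comap f) c ρ g B ↔ GaussNormLE v (f c) ρ (g.map f) B := by
  simp [GaussNormLE, ← map_taylor]

end GaussNormLE

end GaussNorm

section Hensel

variable {L Γ : Type*} [Field L] [LinearOrderedCommGroupWithZero Γ] {v : Valuation L Γ}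

/-- Hensel's lemma for `v`, in the normalisation `h = 1 + X + a₂ X² + ⋯` with `|aⱼ| < 1`, to which
the Hensel–Rychlik form `HasHensel.exists_root` reduces by rescaling. -/
def HasHensel (v : Valuation L Γ) : Prop :=
  ∀ h : L[X], h.coeff 0 = 1 → h.coeff 1 = 1 → (∀ j, 2 ≤ j → v (h.coeff j) < 1) →
    ∃ z, h.eval z = 0 ∧ v z ≤ 1

namespace HasHensel

theorem exists_root_of_coeff (hv : HasHensel v) (h : L[X]) (h₁ : h.coeff 1 ≠ 0)
    (hj : ∀ j, v (h.coeff (j + 2)) * v (h.coeff 0) ^ (j + 1) < v (h.coeff 1) ^ (j + 2)) :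
    ∃ z, h.eval z = 0 ∧ v z * v (h.coeff 1) ≤ v (h.coeff 0) := by
  rcases eq_or_ne (h.coeff 0) 0 with h₀ | h₀
  · exact ⟨0, by rw [← coeff_zero_eq_eval_zero, h₀], by simp⟩
  have hv₁ : v (h.coeff 1) ≠ 0 := v.ne_zero_iff.2 h₁
  set a := h.coeff 0 / h.coeff 1 with ha
  obtain ⟨z, hz, hz₁⟩ := hv (C (h.coeff 0)⁻¹ * h.comp (C a * X))
    (by simp [comp_C_mul_X_coeff, h₀])
    (by simp only [coeff_C_mul, comp_C_mul_X_coeff, a]; field_simp)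
    (fun j hj₂ => by
      obtain ⟨j, rfl⟩ := Nat.exists_eq_add_of_le' hj₂
      have hcoeff : (C (h.coeff 0)⁻¹ * h.comp (C a * X)).coeff (j + 2) =
          h.coeff (j + 2) * h.coeff 0 ^ (j + 1) / h.coeff 1 ^ (j + 2) := by
        simp only [coeff_C_mul, comp_C_mul_X_coeff, a, div_pow, pow_succ' (h.coeff 0) (j + 1)]
        field_simp
      rw [hcoeff, map_div₀, map_mul, map_pow, map_pow,
        div_lt_one₀ (zero_lt_iff.2 (pow_ne_zero _ hv₁))]
      exact hj j)
  refine ⟨a * z, ?_, ?_⟩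
  · simpa [eval_comp, h₀] using hz
  · rw [map_mul, mul_right_comm, ← map_mul, ha, div_mul_cancel₀ _ h₁]
    exact mul_le_of_le_one_right' hz₁

theorem exists_root (hv : HasHensel v) {g : L[X]} {t : L} {ρ B : Γ} (hg : GaussNormLE v t ρ g B)
    (hB : B * v (g.eval t) < (v (g.derivative.eval t) * ρ) ^ 2) :
    ∃ z, g.eval z = 0 ∧ v (z - t) * v (g.derivative.eval t) ≤ v (g.eval t) := by
  have hμρ : 0 < v (g.derivative.eval t) * ρ :=
    zero_lt_iff.2 (pow_ne_zero_iff two_ne_zero |>.1 (zero_le.trans_lt hB).ne')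
  have hρ : ρ ≠ 0 := right_ne_zero_of_mul hμρ.ne'
  have hsmall : v (g.eval t) ≤ v (g.derivative.eval t) * ρ := by
    by_contra! h
    rw [pow_two] at hB
    exact hB.not_ge (mul_le_mul' hg.derivative_mul_le h.le)
  obtain ⟨z, hz, hzt⟩ := hv.exists_root_of_coeff (taylor t g)
    (by rw [taylor_coeff_one]; exact v.ne_zero_iff.1 (left_ne_zero_of_mul hμρ.ne')) fun j => by
      rw [taylor_coeff_one, taylor_coeff_zero]
      refine lt_of_mul_lt_mul_right ?_ (zero_le (a := ρ ^ (j + 2)))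
      calc v ((taylor t g).coeff (j + 2)) * v (g.eval t) ^ (j + 1) * ρ ^ (j + 2)
          = v ((taylor t g).coeff (j + 2)) * ρ ^ (j + 2) * v (g.eval t) * v (g.eval t) ^ j := by
            rw [pow_succ' _ j]; ac_rfl
        _ ≤ B * v (g.eval t) * (v (g.derivative.eval t) * ρ) ^ j := by
            gcongr
            exact hg _
        _ < (v (g.derivative.eval t) * ρ) ^ 2 * (v (g.derivative.eval t) * ρ) ^ j :=
            mul_lt_mul_of_pos_right hB (pow_pos hμρ j)
        _ = v (g.derivative.eval t) ^ (j + 2) * ρ ^ (j + 2) := by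
            rw [← pow_add, add_comm 2 j, mul_pow]
  rw [taylor_coeff_one, taylor_coeff_zero] at hzt
  exact ⟨z + t, by rwa [taylor_eval] at hz, by rwa [add_sub_cancel_right]⟩

theorem exists_eq_pow (hv : HasHensel v) {n : ℕ} {u : L}
    (hu : v (u - 1) < v (n : L) ^ 2) : ∃ y, y ≠ 0 ∧ y ^ n = u := by
  have hn : n ≠ 0 := by rintro rfl; simp at hu
  have hu₁ : v (u - 1) < 1 := hu.trans_le (pow_le_one' (natCast_mem v.integer n) 2)
  have hvu : v u = 1 := by
    simpa using v.map_eq_of_sub_lt (x := 1) (by simpa using hu₁)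
  have hgauss : GaussNormLE v 1 1 (X ^ n - C u) 1 := by
    rw [sub_eq_add_neg, ← C_neg]
    refine .add ?_ (by simpa [hvu] using GaussNormLE.const (v := v) 1 (-u) 1)
    simpa using (GaussNormLE.X_sub_C (v := v) (c := 0) (c' := 1) (by simp) (le_refl 1)).pow n
  obtain ⟨y, hy, -⟩ := hv.exists_root hgauss (by
    rw [v.map_sub_swap] at hu
    simpa [derivative_X_pow] using hu)
  rw [eval_sub, eval_pow, eval_X, eval_C, sub_eq_zero] at hy
  refine ⟨y, ?_, hy⟩
  rintro rfl
  simp [← hy, hn] at hvu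

theorem exists_eq_mul_pow (hv : HasHensel v) {n : ℕ} {a b : L}
    (hab : v (a - b) < v b * v (n : L) ^ 2) : ∃ y, y ≠ 0 ∧ a = b * y ^ n := by
  have hb : 0 < v b := zero_lt_iff.2 (left_ne_zero_of_mul (zero_le.trans_lt hab).ne')
  have hb₀ : b ≠ 0 := v.pos_iff.1 hb
  obtain ⟨y, hy, hyn⟩ := hv.exists_eq_pow (n := n) (u := a / b) (by
    rwa [div_sub_one hb₀, map_div₀, div_lt_iff₀' hb])
  exact ⟨y, hy, by rw [hyn, mul_div_cancel₀ _ hb₀]⟩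

end HasHensel

end Hensel

/-- `a ∈ K^{×n}`; unlike `∃ y, y ^ n = a`, this fails for `a = 0 < n`. -/
def IsNonzeroPow {K : Type*} [Field K] (n : ℕ) (a : K) : Prop :=
  ∃ y : K, y ≠ 0 ∧ y ^ n = a

section IsNonzeroPow

variable {K : Type*} [Field K] {m n : ℕ} {a b y : K}

@[simp]
theorem isNonzeroPow_one : IsNonzeroPow 1 a ↔ a ≠ 0 := by
  simp [IsNonzeroPow]

theorem isNonzeroPow_mul_pow_iff (hy : y ≠ 0) : IsNonzeroPow n (a * y ^ n) ↔ IsNonzeroPow n a :=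
  ⟨fun ⟨z, hz, h⟩ => ⟨z / y, div_ne_zero hz hy, by
    rw [div_pow, h, mul_div_cancel_right₀ _ (pow_ne_zero n hy)]⟩,
  fun ⟨z, hz, h⟩ => ⟨z * y, mul_ne_zero hz hy, by rw [mul_pow, h]⟩⟩

theorem exists_inv_eq_pow_mul_pow (hn : 0 < n) (a : K) :
    ∃ y : K, y ≠ 0 ∧ a⁻¹ = a ^ (2 * n - 1) * y ^ n := by
  rcases eq_or_ne a 0 with rfl | ha
  · exact ⟨1, one_ne_zero, by simp [show 2 * n - 1 ≠ 0 by omega]⟩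
  · refine ⟨(a ^ 2)⁻¹, inv_ne_zero (pow_ne_zero 2 ha), ?_⟩
    rw [inv_pow, ← pow_mul, eq_mul_inv_iff_mul_eq₀ (pow_ne_zero _ ha), inv_mul_eq_iff_eq_mul₀ ha,
      ← pow_succ', Nat.sub_add_cancel (by omega)]

end IsNonzeroPow

theorem aeval_inv_eq_aeval_reverse_mul {S K : Type*} [CommRing S] [Field K] [Algebra S K] {x : K}
    (hx : x ≠ 0) {g : S[X]} : aeval x⁻¹ g = aeval x g.reverse * x⁻¹ ^ g.natDegree := by
  let := invertibleOfNonzero (inv_ne_zero hx)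
  have := eval₂_reverse_mul_pow (algebraMap S K) x⁻¹ g
  rwa [invOf_eq_inv, inv_inv, ← aeval_def, ← aeval_def, eq_comm] at this

/-- `S` has the same nonzero powers, as a subfield of `L` and of `L'`: this is the invariant of the
back-and-forth. -/
def SamePowers (S L L' : Type*) [CommRing S] [Field L] [Field L'] [Algebra S L] [Algebra S L'] :
    Prop :=
  ∀ n, 0 < n → ∀ z : S, IsNonzeroPow n (algebraMap S L z) ↔ IsNonzeroPow n (algebraMap S L' z)

/-- `a` and `b` lie in the same coset `c L^{×n}`, `c L'^{×n}` of nonzero `n`-th powers, for some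
`c ∈ S`. -/
def SameCoset (S : Type*) {L L' : Type*} [CommRing S] [Field L] [Field L'] [Algebra S L]
    [Algebra S L'] (n : ℕ) (a : L) (b : L') : Prop :=
  ∃ (c : S) (y : L) (y' : L'), y ≠ 0 ∧ y' ≠ 0 ∧ a = algebraMap S L c * y ^ n ∧
    b = algebraMap S L' c * y' ^ n

namespace SameCoset

variable {S L L' : Type*} [CommRing S] [Field L] [Field L'] [Algebra S L] [Algebra S L'] {m n : ℕ}
  {a a₁ : L} {b b₁ : L'}

theorem of_algebraMap (n : ℕ) (c : S) :
    SameCoset S n (algebraMap S L c) (algebraMap S L' c) :=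
  ⟨c, 1, 1, one_ne_zero, one_ne_zero, by simp, by simp⟩

theorem mul (h : SameCoset S n a b) (h₁ : SameCoset S n a₁ b₁) :
    SameCoset S n (a * a₁) (b * b₁) := by
  obtain ⟨c, y, y', hy, hy', rfl, rfl⟩ := h
  obtain ⟨c₁, y₁, y₁', hy₁, hy₁', rfl, rfl⟩ := h₁
  exact ⟨c * c₁, y * y₁, y' * y₁', mul_ne_zero hy hy₁, mul_ne_zero hy' hy₁',
    by rw [map_mul, mul_pow, mul_mul_mul_comm], by rw [map_mul, mul_pow, mul_mul_mul_comm]⟩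

theorem pow (h : SameCoset S n a b) (l : ℕ) : SameCoset S n (a ^ l) (b ^ l) := by
  induction l with
  | zero => simpa using of_algebraMap (L := L) (L' := L') n (1 : S)
  | succ l ih => simpa only [pow_succ] using ih.mul h

theorem mul_pow (h : SameCoset S n a b) {y : L} {y' : L'} (hy : y ≠ 0) (hy' : y' ≠ 0) :
    SameCoset S n (a * y ^ n) (b * y' ^ n) :=
  h.mul ⟨1, y, y', hy, hy', by simp, by simp⟩

theorem of_dvd (hmn : m ∣ n) (h : SameCoset S n a b) : SameCoset S m a b := by
  obtain ⟨d, rfl⟩ := hmn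
  obtain ⟨c, y, y', hy, hy', rfl, rfl⟩ := h
  exact ⟨c, y ^ d, y' ^ d, pow_ne_zero d hy, pow_ne_zero d hy',
    by rw [← pow_mul, mul_comm d], by rw [← pow_mul, mul_comm d]⟩

theorem isNonzeroPow_iff (hS : SamePowers S L L') (hn : 0 < n) (h : SameCoset S n a b) :
    IsNonzeroPow n a ↔ IsNonzeroPow n b := by
  obtain ⟨c, y, y', hy, hy', rfl, rfl⟩ := h
  rw [isNonzeroPow_mul_pow_iff hy, isNonzeroPow_mul_pow_iff hy', hS n hn]

theorem eq_zero_iff (hS : SamePowers S L L') (h : SameCoset S n a b) : a = 0 ↔ b = 0 := by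
  simpa [not_iff_not] using (h.of_dvd (one_dvd n)).isNonzeroPow_iff hS one_pos

theorem inv (hn : 0 < n) (h : SameCoset S n a b) : SameCoset S n a⁻¹ b⁻¹ := by
  obtain ⟨c, y, y', hy, hy', rfl, rfl⟩ := h
  obtain ⟨z, hz, hcz⟩ := exists_inv_eq_pow_mul_pow hn (algebraMap S L c)
  obtain ⟨z', hz', hcz'⟩ := exists_inv_eq_pow_mul_pow hn (algebraMap S L' c)
  exact ⟨c ^ (2 * n - 1), z * y⁻¹, z' * y'⁻¹, mul_ne_zero hz (inv_ne_zero hy),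
    mul_ne_zero hz' (inv_ne_zero hy'),
    by rw [mul_inv, hcz, _root_.mul_pow, map_pow, inv_pow, mul_assoc],
    by rw [mul_inv, hcz', _root_.mul_pow, map_pow, inv_pow, mul_assoc]⟩

theorem aeval_inv (hn : 0 < n) (ha : a ≠ 0) (hb : b ≠ 0) (h : SameCoset S n a b) {g : S[X]}
    (hg : SameCoset S n (aeval a g.reverse) (aeval b g.reverse)) :
    SameCoset S n (aeval a⁻¹ g) (aeval b⁻¹ g) := by
  rw [aeval_inv_eq_aeval_reverse_mul ha, aeval_inv_eq_aeval_reverse_mul hb]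
  exact hg.mul ((h.inv hn).pow _)

end SameCoset

/-- The properties of the `v`-adic completion of a number field `k` from which the elimination of
quantifiers is derived; they are inherited by ultrapowers. The element `π` is a uniformizer and `q`
is prime to the residue characteristic, so that `|x| ≤ 1` if and only if `1 + π x ^ q` is a `q`-th
power. -/
structure IsPadicLike (k : Type*) {L Γ : Type*} [Field k] [Field L] [Algebra k L]
    [LinearOrderedCommGroupWithZero Γ] (v : Valuation L Γ) (π : k) (q : ℕ) : Prop where
  hensel : HasHensel v
  exists_finset_sub_lt : ∀ κ : k, κ ≠ 0 → ∃ T : Finset k, ∀ u, v u ≤ 1 →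
    ∃ r ∈ T, v (u - algebraMap k L r) < v (algebraMap k L κ)
  exists_le_mul_pow : ∀ n, 0 < n → ∃ κ : k, κ ≠ 0 ∧ ∀ x, x ≠ 0 →
    ∃ y, v (algebraMap k L κ) ≤ v (x * y ^ n) ∧ v (x * y ^ n) ≤ 1
  le_one_iff : ∀ x, v x ≤ 1 ↔ IsNonzeroPow q (1 + algebraMap k L π * x ^ q)
  pos : 0 < q

namespace IsPadicLike

section

variable {k L Γ : Type*} [Field k] [Field L] [Algebra k L]
  [LinearOrderedCommGroupWithZero Γ] {v : Valuation L Γ} {π : k} {q : ℕ}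

theorem exists_sub_lt (hL : IsPadicLike k v π q) {u x : L} (hu : v u ≤ v x) {κ : k} (hx : x ≠ 0)
    (hκ : κ ≠ 0) : ∃ r : k, v (u - algebraMap k L r * x) < v x * v (algebraMap k L κ) := by
  have hvx : 0 < v x := v.pos_iff.2 hx
  obtain ⟨T, hT⟩ := hL.exists_finset_sub_lt κ hκ
  obtain ⟨r, -, hr⟩ := hT (u / x) (by rwa [map_div₀, div_le_one₀ hvx])
  refine ⟨r, ?_⟩
  rwa [← div_lt_iff₀' hvx, ← map_div₀, sub_div, mul_div_cancel_right₀ _ hx]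

theorem exists_finset_eq_mul_pow [CharZero k] (hL : IsPadicLike k v π q) {n : ℕ} (hn : 0 < n) :
    ∃ T : Finset k, ∀ x : L, x ≠ 0 → ∃ a ∈ T, ∃ y, y ≠ 0 ∧ x = algebraMap k L a * y ^ n := by
  obtain ⟨κ, hκ, hbound⟩ := hL.exists_le_mul_pow n hn
  have hn₀ : (n : k) ≠ 0 := Nat.cast_ne_zero.2 hn.ne'
  obtain ⟨T, hT⟩ := hL.exists_finset_sub_lt (κ * n ^ 2) (mul_ne_zero hκ (pow_ne_zero 2 hn₀))
  refine ⟨T, fun x hx => ?_⟩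
  obtain ⟨y, hκy, hy₁⟩ := hbound x hx
  have hy : y ^ n ≠ 0 := by
    intro h
    simp [h, hκ] at hκy
  obtain ⟨a, haT, ha⟩ := hT _ hy₁
  obtain ⟨z, hz, haz⟩ := hL.hensel.exists_eq_mul_pow (n := n) (a := algebraMap k L a)
    (b := x * y ^ n) (by
      rw [v.map_sub_swap]
      refine ha.trans_le ?_
      rw [map_mul, map_mul, map_pow, map_pow, map_natCast]
      gcongr)
  have hyn : y ≠ 0 := fun h => hy (by rw [h, zero_pow hn.ne'])
  refine ⟨a, haT, (y * z)⁻¹, inv_ne_zero (mul_ne_zero hyn hz), ?_⟩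
  rw [haz, inv_pow, mul_pow, mul_assoc x, mul_inv_cancel_right₀ (mul_ne_zero hy (pow_ne_zero n hz))]

theorem exists_valuation_lt_one [Infinite k] (hL : IsPadicLike k v π q) :
    ∃ κ : k, κ ≠ 0 ∧ v (algebraMap k L κ) < 1 := by
  by_contra! h
  have h₁ (a : k) : v (algebraMap k L a) ≤ 1 := by
    rcases eq_or_ne a 0 with rfl | ha
    · simp
    · simpa using inv_le_one_of_one_le₀ (h a⁻¹ (inv_ne_zero ha))
  obtain ⟨T, hT⟩ := hL.exists_finset_sub_lt 1 one_ne_zero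
  choose r hrT hr using fun a => hT _ (h₁ a)
  obtain ⟨a, b, hab, hrab⟩ := Finite.exists_ne_map_eq_of_infinite fun a => (⟨r a, hrT a⟩ : T)
  refine (h (a - b) (sub_ne_zero.2 hab)).not_gt ?_
  rw [map_sub, ← sub_sub_sub_cancel_right _ _ (algebraMap k L (r b))]
  refine v.map_sub_lt ?_ (by simpa using hr b)
  rw [← Subtype.mk.inj hrab]
  simpa using hr a

theorem exists_valuation_lt_one_and_le [Infinite k] (hL : IsPadicLike k v π q) {a : k}
    (ha : a ≠ 0) : ∃ κ : k, κ ≠ 0 ∧ v (algebraMap k L κ) < 1 ∧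
      v (algebraMap k L κ) ≤ v (algebraMap k L a) := by
  obtain ⟨κ, hκ, hκ₁⟩ := hL.exists_valuation_lt_one
  rcases le_total (v (algebraMap k L a)) 1 with h | h
  · refine ⟨κ * a, mul_ne_zero hκ ha, ?_⟩
    rw [map_mul, map_mul]
    exact ⟨mul_lt_one_of_lt_of_le hκ₁ h, mul_le_of_le_one_left' hκ₁.le⟩
  · exact ⟨κ, hκ, hκ₁, hκ₁.le.trans h⟩

theorem exists_eq_mul_pow [CharZero k] (hL : IsPadicLike k v π q) {n : ℕ} (hn : 0 < n) {x : L}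
    (hx : x ≠ 0) : ∃ (a : k) (y : L), y ≠ 0 ∧ x = algebraMap k L a * y ^ n := by
  obtain ⟨T, hT⟩ := hL.exists_finset_eq_mul_pow hn
  obtain ⟨a, -, h⟩ := hT x hx
  exact ⟨a, h⟩

end

theorem isEquiv_comap {k S L L' Γ Γ' : Type*} [Field k] [Field S] [Field L] [Field L']
    [Algebra k S] [Algebra k L] [Algebra k L'] [Algebra S L] [Algebra S L'] [IsScalarTower k S L]
    [IsScalarTower k S L'] [LinearOrderedCommGroupWithZero Γ] [LinearOrderedCommGroupWithZero Γ']
    {v : Valuation L Γ} {v' : Valuation L' Γ'} {π : k} {q : ℕ} (hL : IsPadicLike k v π q)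
    (hL' : IsPadicLike k v' π q) (hS : SamePowers S L L') :
    (v.comap (algebraMap S L)).IsEquiv (v'.comap (algebraMap S L')) := by
  refine Valuation.isEquiv_iff_val_le_one.2 fun {x} => ?_
  have h := hS q hL.pos (1 + algebraMap k S π * x ^ q)
  simp only [map_add, map_one, map_mul, map_pow, ← IsScalarTower.algebraMap_apply] at h
  rw [Valuation.comap_apply, Valuation.comap_apply, hL.le_one_iff, hL'.le_one_iff, h]

end IsPadicLike

theorem GaussNormLE.recenter_eval {L Γ : Type*} [Field L] [LinearOrderedCommGroupWithZero Γ]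
    {v : Valuation L Γ} {c c' t κ : L} {ρ : Γ} {g : L[X]}
    (h : GaussNormLE v c ρ g (v (g.eval t / κ))) (hκ : v κ ≤ 1) (ht : v (t - c) ≤ ρ)
    (hc' : v (t - c') < ρ * v κ) : GaussNormLE v c' ρ g (v (g.eval c' / κ)) := by
  have heval : v (g.eval c') = v (g.eval t) := by
    rcases (h.recenter ht le_rfl).eval_eq_or_eval_sub_lt (v.map_sub_swap _ _ ▸ hc') hκ with hg | hg
    · rw [hg]
    · refine v.map_eq_of_sub_lt (hg.trans_le ?_)
      rw [← map_mul]
      rcases eq_or_ne κ 0 with rfl | hκ₀ <;> simp [*]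
  rw [map_div₀, heval, ← map_div₀]
  refine h.recenter ?_ le_rfl
  rw [← sub_sub_sub_cancel_left _ _ t]
  exact (v.map_sub _ _).trans (max_le ht (hc'.le.trans (mul_le_of_le_one_right' hκ)))

/-- Every root in `L` of a nonzero polynomial over `S` of degree less than `d` lies in `S`. -/
def RootClosedBelow (S L : Type*) [CommRing S] [CommRing L] [Algebra S L] (d : ℕ) : Prop :=
  ∀ g : S[X], g ≠ 0 → g.natDegree < d → ∀ x : L, aeval x g = 0 → x ∈ Set.range (algebraMap S L)

/-- Up to a nonzero constant of `k`, the terms of the expansion of `g` at `c` do not cancel at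
`t`. -/
def IsTame (k : Type*) {L Γ : Type*} [Field k] [Field L] [Algebra k L]
    [LinearOrderedCommGroupWithZero Γ] (v : Valuation L Γ) (t c : L) (g : L[X]) : Prop :=
  ∃ κ : k, κ ≠ 0 ∧ v (algebraMap k L κ) ≤ 1 ∧
    GaussNormLE v c (v (t - c)) g (v (g.eval t / algebraMap k L κ))

namespace IsTame

variable {k L Γ : Type*} [Field k] [Field L] [Algebra k L] [LinearOrderedCommGroupWithZero Γ]
  {v : Valuation L Γ} {t c c' x : L} {g h : L[X]}

theorem of_gaussNormLE (hg : GaussNormLE v c (v (t - c)) g (v (g.eval t))) : IsTame k v t c g :=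
  ⟨1, one_ne_zero, by simp, by simpa using hg⟩

theorem recenter (hg : IsTame k v t c g) (hc : v (t - c') ≤ v (t - c)) : IsTame k v t c' g := by
  obtain ⟨κ, hκ, hκ₁, h⟩ := hg
  refine ⟨κ, hκ, hκ₁, h.recenter ?_ hc⟩
  rw [← sub_sub_sub_cancel_left]
  exact (v.map_sub _ _).trans (max_le le_rfl hc)

theorem mul (hg : IsTame k v t c g) (hh : IsTame k v t c h) : IsTame k v t c (g * h) := by
  obtain ⟨κ, hκ, hκ₁, hgκ⟩ := hg
  obtain ⟨κ', hκ', hκ₁', hhκ⟩ := hh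
  refine ⟨κ * κ', mul_ne_zero hκ hκ', by simpa using mul_le_one' hκ₁ hκ₁', ?_⟩
  rw [eval_mul, map_mul, mul_div_mul_comm, map_mul]
  exact hgκ.mul hhκ

theorem X_sub_C (hx : v (t - c) ≤ v (t - x)) : IsTame k v t c (X - C x) := by
  refine of_gaussNormLE ?_
  rw [eval_sub, eval_X, eval_C]
  refine GaussNormLE.X_sub_C ?_ hx
  rw [← sub_sub_sub_cancel_left]
  exact (v.map_sub _ _).trans (max_le le_rfl hx)

theorem of_natDegree_eq_zero (hg : g.natDegree = 0) : IsTame k v t c g := by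
  obtain ⟨a, rfl⟩ := natDegree_eq_zero.1 hg
  refine of_gaussNormLE ?_
  rw [eval_C]
  exact .const _ _ _

theorem exists_forall_finset {S : Type*} {f : S → L} {F : Finset L[X]}
    (hF : ∀ g ∈ F, ∃ c, IsTame k v t (f c) g) [Nonempty S] :
    ∃ c, ∀ g ∈ F, IsTame k v t (f c) g := by
  classical
  induction F using Finset.induction_on with
  | empty => simp
  | insert g F _ ih =>
    obtain ⟨⟨c, hc⟩, hF⟩ := Finset.forall_mem_insert _ _ _ |>.1 hF
    obtain ⟨c', hc'⟩ := ih hF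
    rcases le_total (v (t - f c)) (v (t - f c')) with h | h
    · exact ⟨c, Finset.forall_mem_insert _ _ _ |>.2 ⟨hc, fun g hg => (hc' g hg).recenter h⟩⟩
    · exact ⟨c', Finset.forall_mem_insert _ _ _ |>.2 ⟨hc.recenter h, hc'⟩⟩

theorem exists_uniform {F : Finset L[X]} (hF : ∀ g ∈ F, IsTame k v t c g) :
    ∃ κ : k, κ ≠ 0 ∧ v (algebraMap k L κ) ≤ 1 ∧
      ∀ g ∈ F, GaussNormLE v c (v (t - c)) g (v (g.eval t / algebraMap k L κ)) := by
  classical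
  have mono {κ κ' : k} {g : L[X]} (hκ : κ ≠ 0) (h : v (algebraMap k L κ) ≤ v (algebraMap k L κ'))
      (hg : GaussNormLE v c (v (t - c)) g (v (g.eval t / algebraMap k L κ'))) :
      GaussNormLE v c (v (t - c)) g (v (g.eval t / algebraMap k L κ)) := by
    refine hg.mono ?_
    rw [map_div₀, map_div₀]
    exact div_le_div_of_nonneg_left zero_le (v.pos_iff.2 (by simpa)) h
  induction F using Finset.induction_on with
  | empty => exact ⟨1, by simp⟩
  | insert g F _ ih =>
    obtain ⟨⟨κ, hκ, hκ₁, hg⟩, hF⟩ := Finset.forall_mem_insert _ _ _ |>.1 hF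
    obtain ⟨κ', hκ', hκ₁', hF⟩ := ih hF
    rcases le_total (v (algebraMap k L κ)) (v (algebraMap k L κ')) with h | h
    · exact ⟨κ, hκ, hκ₁, Finset.forall_mem_insert _ _ _ |>.2
        ⟨hg, fun g hg => mono hκ h (hF g hg)⟩⟩
    · exact ⟨κ', hκ', hκ₁', Finset.forall_mem_insert _ _ _ |>.2 ⟨mono hκ' h hg, hF⟩⟩

theorem or_gaussNormLE {B : Γ} (h : GaussNormLE v c (v (t - c)) (g - C (g.eval c)) B) :
    IsTame k v t c g ∨ GaussNormLE v c (v (t - c)) g B := by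
  have hsub : v (g.eval t - g.eval c) ≤ B := by
    simpa using h.eval_sub_le (x := t) (ε := 1) (by simp) le_rfl
  rcases lt_or_ge B (v (g.eval c)) with hc | hc
  · refine .inl (of_gaussNormLE ?_)
    rw [v.map_eq_of_sub_lt (hsub.trans_lt hc)]
    exact (h.mono hc.le).add_const le_rfl
  · exact .inr (h.add_const hc)

theorem eval_lt_of_not {B : Γ} {κ : k} (hg : ¬ IsTame k v t c g)
    (h : GaussNormLE v c (v (t - c)) g B) (hκ : κ ≠ 0) (hκ₁ : v (algebraMap k L κ) ≤ 1) :
    v (g.eval t) < B * v (algebraMap k L κ) := by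
  by_contra! hB
  refine hg ⟨κ, hκ, hκ₁, h.mono ?_⟩
  rwa [map_div₀, le_div_iff₀ (v.pos_iff.2 (by simpa))]

end IsTame

section Near

variable {k S L Γ : Type*} [Field k] [CharZero k] [Field L] [Algebra k L]
  [LinearOrderedCommGroupWithZero Γ] {v : Valuation L Γ} {d : ℕ} {t : L}

/-- If the terms of `g'` do not cancel but those of `g` do, then `|g(t)|` is so small compared to
`|g'(t)|` that Hensel's lemma applies near `t`. -/
theorem HasHensel.exists_root_of_not_isTame (hv : HasHensel v) {g : L[X]} {c : L}
    (hg' : IsTame k v t c g.derivative) (hg : ¬ IsTame k v t c g) : ∃ z, g.eval z = 0 := by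
  have := charZero_of_injective_algebraMap (algebraMap k L).injective
  obtain ⟨κ, hκ, hκ₁, h'⟩ := hg'
  set ρ := v (t - c)
  set D := (g.natDegree.factorial : k) with hD
  have hD₀ : D ≠ 0 := Nat.cast_ne_zero.2 (Nat.factorial_ne_zero _)
  have hD₁ : v (algebraMap k L D) ≤ 1 := by
    rw [hD, map_natCast]
    exact natCast_mem v.integer _
  have hκD : 0 < v (algebraMap k L (κ * D)) := v.pos_iff.2 (by simp [hκ, hD₀])
  have hκD₁ : v (algebraMap k L (κ * D)) ≤ 1 := by simpa using mul_le_one' hκ₁ hD₁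
  set B := v (g.derivative.eval t) * ρ / v (algebraMap k L (κ * D)) with hB
  have hsub : GaussNormLE v c ρ (g - C (g.eval c)) B := by
    refine (h'.of_derivative le_rfl (Nat.cast_ne_zero.2 (Nat.factorial_ne_zero _))).mono ?_
    rw [hB, map_div₀, map_mul, map_mul, hD, map_natCast (algebraMap k L), div_mul_eq_mul_div,
      div_div]
  have hgauss : GaussNormLE v c ρ g B := (IsTame.or_gaussNormLE hsub).resolve_left hg
  have hsmall : v (g.eval t) < B * v (algebraMap k L (κ * D)) ^ 2 := by
    simpa only [map_pow] using IsTame.eval_lt_of_not hg hgauss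
      (pow_ne_zero 2 (mul_ne_zero hκ hD₀)) (by simpa only [map_pow] using pow_le_one' hκD₁ 2)
  have hB₀ : 0 < B := zero_lt_iff.2 (left_ne_zero_of_mul (zero_le.trans_lt hsmall).ne')
  obtain ⟨z, hz, -⟩ := hv.exists_root (hgauss.recenter le_rfl le_rfl) <| calc
    B * v (g.eval t) < B * (B * v (algebraMap k L (κ * D)) ^ 2) := mul_lt_mul_of_pos_left hsmall hB₀
    _ = (v (g.derivative.eval t) * ρ) ^ 2 := by
      rw [← mul_assoc, ← pow_two, ← mul_pow, hB, div_mul_cancel₀ _ hκD.ne']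
  exact ⟨z, hz⟩

variable [Field S] [Algebra S L]

theorem HasHensel.exists_isTame (hv : HasHensel v) (hS : RootClosedBelow S L d) (t : L) (g : S[X])
    (hg : g.natDegree < d) : ∃ c : S, IsTame k v t (algebraMap S L c) (g.map (algebraMap S L)) := by
  induction hn : g.natDegree using Nat.strong_induction_on generalizing g with
  | _ n ih =>
  rcases eq_or_ne g.natDegree 0 with h₀ | h₀
  · exact ⟨0, .of_natDegree_eq_zero (by rw [natDegree_map, h₀])⟩
  by_cases! hroot : ∃ z : L, (g.map (algebraMap S L)).eval z = 0
  · obtain ⟨z, hz⟩ := hroot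
    rw [eval_map_algebraMap] at hz
    obtain ⟨x, rfl⟩ := hS g (ne_zero_of_natDegree_gt (Nat.pos_of_ne_zero h₀)) hg z hz
    rw [aeval_algebraMap_apply, map_eq_zero] at hz
    obtain ⟨g, rfl⟩ := dvd_iff_isRoot.2 hz
    have hlt : g.natDegree < ((X - C x) * g).natDegree := by
      rw [(monic_X_sub_C x).natDegree_mul' (by rintro rfl; simp at h₀), natDegree_X_sub_C]
      omega
    obtain ⟨c, hc⟩ := ih _ (hn ▸ hlt) g (hlt.trans hg) rfl
    rw [Polynomial.map_mul, Polynomial.map_sub, map_X, map_C]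
    rcases le_total (v (t - algebraMap S L x)) (v (t - algebraMap S L c)) with h | h
    · exact ⟨x, (IsTame.X_sub_C le_rfl).mul (hc.recenter h)⟩
    · exact ⟨c, (IsTame.X_sub_C h).mul hc⟩
  · have hlt := natDegree_derivative_lt h₀
    obtain ⟨c, hc⟩ := ih _ (hn ▸ hlt) _ (hlt.trans hg) rfl
    rw [← derivative_map] at hc
    refine ⟨c, by_contra fun h => ?_⟩
    obtain ⟨z, hz⟩ := hv.exists_root_of_not_isTame hc h
    exact hroot z hz

variable [Algebra k S] [IsScalarTower k S L]

theorem IsPadicLike.exists_near {π : k} {q : ℕ} (hL : IsPadicLike k v π q)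
    (hS : RootClosedBelow S L d) (ht : t ∉ Set.range (algebraMap S L))
    (hval : ∀ c, ∃ s, v (algebraMap S L s) = v (t - algebraMap S L c))
    (G : Finset S[X]) (hG : ∀ g ∈ G, g.natDegree < d) {m : ℕ} (hm : m ≠ 0) :
    ∃ κ c s : S, κ ≠ 0 ∧ s ≠ 0 ∧ v (algebraMap S L κ) ≤ 1 ∧
      v (t - algebraMap S L c) < v (algebraMap S L (s * (κ ^ 2 * m))) ∧
      ∀ g ∈ G, GaussNormLE (v.comap (algebraMap S L)) c (v (algebraMap S L s)) g
        (v (algebraMap S L (g.eval c / κ))) := by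
  classical
  obtain ⟨c, hc⟩ := IsTame.exists_forall_finset (f := algebraMap S L)
    (F := G.image (map (algebraMap S L))) (k := k) (v := v) (t := t)
    (by simpa using fun g hg => hL.hensel.exists_isTame hS t g (hG g hg))
  obtain ⟨κ, hκ, hκ₁, hgauss⟩ := IsTame.exists_uniform hc
  rw [IsScalarTower.algebraMap_apply k S L] at hκ₁ hgauss
  obtain ⟨s, hs⟩ := hval c
  have hs₀ : algebraMap S L s ≠ 0 := by
    rw [← v.ne_zero_iff, hs, v.ne_zero_iff, sub_ne_zero]
    rintro rfl
    exact ht ⟨c, rfl⟩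
  obtain ⟨r, hr⟩ := hL.exists_sub_lt hs.ge hs₀ (κ := κ ^ 2 * m) (by simp [hκ, hm])
  rw [sub_sub, IsScalarTower.algebraMap_apply k S L, IsScalarTower.algebraMap_apply k S L,
    ← map_mul (algebraMap S L), ← map_add, ← map_mul v, ← map_mul (algebraMap S L),
    map_mul (algebraMap k S), map_pow, map_natCast] at hr
  refine ⟨algebraMap k S κ, c + algebraMap k S r * s, s, by simpa, by simpa using hs₀, hκ₁, hr,
    fun g hg => ?_⟩
  rw [GaussNormLE.comap_iff, map_div₀, ← eval_map_apply]
  refine (hs ▸ hgauss _ (Finset.mem_image_of_mem _ hg)).recenter_eval hκ₁ hs.ge (hr.trans_le ?_)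
  have hm₁ : v (m : L) ≤ 1 := natCast_mem v.integer m
  rw [map_mul, map_mul, map_mul, map_mul, map_pow, map_pow, map_natCast (algebraMap S L), pow_two,
    mul_assoc]
  gcongr
  exact mul_le_of_le_one_right' (mul_le_one' hκ₁ hm₁)

end Near

section Transfer

variable {L Γ : Type*} [Field L] [LinearOrderedCommGroupWithZero Γ] {v : Valuation L Γ}
  {c s t κ δ μ : L} {f g : L[X]} {n : ℕ}

theorem HasHensel.exists_eval_eq_mul_pow (hv : HasHensel v) (hκ : v κ ≤ 1)
    (hg : GaussNormLE v c (v s) g (v (g.eval c / κ))) (ht : v (t - c) < v (s * (κ * n ^ 2))) :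
    ∃ y, y ≠ 0 ∧ g.eval t = g.eval c * y ^ n := by
  have hn₁ : v ((n : L) ^ 2) ≤ 1 := by
    rw [map_pow]
    exact pow_le_one' (natCast_mem v.integer n) 2
  have hκ₀ : κ ≠ 0 := by
    rintro rfl
    simp at ht
  rw [map_mul] at ht
  rcases hg.eval_eq_or_eval_sub_lt ht (by rw [map_mul]; exact mul_le_one' hκ hn₁) with h | h
  · exact ⟨1, one_ne_zero, by simpa⟩
  · refine hv.exists_eq_mul_pow (h.trans_eq ?_)
    rw [← map_mul, ← mul_assoc, div_mul_cancel₀ _ hκ₀, map_mul, map_pow]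

section Algebra

variable {S : Type*} [Field S] [Algebra S L] {c s κ δ μ : S} {f : S[X]}

theorem GaussNormLE.of_root [CharZero S] (hft : aeval t f = 0) (hf : f.derivative ≠ 0)
    (h : GaussNormLE (v.comap (algebraMap S L)) c (v (algebraMap S L s)) f.derivative
      (v (algebraMap S L (f.derivative.eval c / κ))))
    (hδ : δ = κ * f.natDegree.factorial) (hμ : v (algebraMap S L μ) ≤ 1)
    (ht : v (t - algebraMap S L c) < v (algebraMap S L (s * μ))) :
    GaussNormLE (v.comap (algebraMap S L)) c (v (algebraMap S L s)) f
        (v (algebraMap S L (f.derivative.eval c * s / δ))) ∧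
      v (algebraMap S L (f.eval c)) < v (algebraMap S L (f.derivative.eval c * s / δ * μ)) := by
  have hD : (f.natDegree.factorial : S) ≠ 0 := Nat.cast_ne_zero.2 (Nat.factorial_ne_zero _)
  rw [map_mul, map_mul] at ht
  have hs : v (algebraMap S L s) ≠ 0 := left_ne_zero_of_mul (zero_le.trans_lt ht).ne'
  have hsub : GaussNormLE (v.comap (algebraMap S L)) c (v (algebraMap S L s))
      (f - C (f.eval c)) (v (algebraMap S L (f.derivative.eval c * s / δ))) := by
    convert h.of_derivative le_rfl hD using 1
    rw [Valuation.comap_apply, ← map_mul, ← map_div₀, ← map_mul, ← map_div₀, hδ,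
      div_mul_eq_mul_div, div_div]
  have hB : f.derivative.eval c * s / δ ≠ 0 := by
    intro h₀
    replace h₀ : f.derivative.eval c / κ = 0 := by simp_all
    rw [h₀, map_zero, map_zero] at h
    exact hf (h.eq_zero hs)
  have hlt : v (algebraMap S L (f.eval c)) <
      v (algebraMap S L (f.derivative.eval c * s / δ * μ)) := by
    rcases (GaussNormLE.comap_iff _).1 hsub |>.eval_eq_or_eval_sub_lt ht hμ with h | h
    · have hc : f.eval c = 0 := by simpa [hft, aeval_algebraMap_apply] using h
      rw [hc, map_zero, map_zero, v.pos_iff, _root_.map_ne_zero]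
      exact mul_ne_zero hB <| by
        simpa using right_ne_zero_of_mul (zero_le.trans_lt ht).ne'
    · simpa [hft, aeval_algebraMap_apply] using h
  refine ⟨hsub.add_const (hlt.le.trans ?_), hlt⟩
  rw [map_mul, map_mul]
  exact mul_le_of_le_one_right' hμ

theorem HasHensel.exists_root_near (hv : HasHensel v) (hμ : v (algebraMap S L μ) ≤ 1)
    (h : GaussNormLE (v.comap (algebraMap S L)) c (v (algebraMap S L s)) f
      (v (algebraMap S L (f.derivative.eval c * s / δ))))
    (hlt : v (algebraMap S L (f.eval c)) <
      v (algebraMap S L (f.derivative.eval c * s / δ * (δ ^ 2 * μ)))) :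
    ∃ z : L, aeval z f = 0 ∧ v (z - algebraMap S L c) < v (algebraMap S L (s * (δ * μ))) := by
  have h₀ : f.derivative.eval c * s / δ * (δ ^ 2 * μ) ≠ 0 := by
    rw [← map_ne_zero (algebraMap S L)]
    exact v.pos_iff.1 (zero_le.trans_lt hlt)
  have hδ : δ ≠ 0 := by
    rintro rfl
    simp at h₀
  have hD : f.derivative.eval c * s ≠ 0 := left_ne_zero_of_mul (div_eq_mul_inv _ δ ▸
    left_ne_zero_of_mul h₀)
  obtain ⟨z, hz, hzc⟩ := hv.exists_root ((GaussNormLE.comap_iff _).1 h) <| by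
    rw [derivative_map, eval_map_apply, eval_map_apply]
    calc
    _ < v (algebraMap S L (f.derivative.eval c * s / δ)) *
        v (algebraMap S L (f.derivative.eval c * s / δ * (δ ^ 2 * μ))) :=
      mul_lt_mul_of_pos_left hlt (v.pos_iff.2 (by simpa using ⟨⟨by simp_all, by simp_all⟩, hδ⟩))
    _ = (v (algebraMap S L (f.derivative.eval c)) * v (algebraMap S L s)) ^ 2 *
        v (algebraMap S L μ) := by
      simp only [← map_mul, ← map_pow]
      congr 2
      field_simp
    _ ≤ _ := mul_le_of_le_one_right' hμ
  refine ⟨z, by rwa [← eval_map_algebraMap], lt_of_mul_lt_mul_right'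
    (a := v (algebraMap S L (f.derivative.eval c))) ?_⟩
  rw [derivative_map, eval_map_apply, eval_map_apply] at hzc
  refine hzc.trans_lt (hlt.trans_eq ?_)
  rw [← map_mul, ← map_mul]
  congr 2
  field_simp

end Algebra

end Transfer

namespace IsPadicLike

variable {k S L L' Γ Γ' : Type*} [Field k] [CharZero k] [Field S] [Field L] [Field L']
  [Algebra k S] [Algebra k L] [Algebra k L'] [Algebra S L] [Algebra S L'] [IsScalarTower k S L]
  [IsScalarTower k S L'] [LinearOrderedCommGroupWithZero Γ] [LinearOrderedCommGroupWithZero Γ']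
  {v : Valuation L Γ} {v' : Valuation L' Γ'} {π : k} {q n d : ℕ} {t : L} {t' : L'}

omit [CharZero k] in
theorem sameCoset_aeval (hL : IsPadicLike k v π q) (hL' : IsPadicLike k v' π q)
    (hS : SamePowers S L L') {c s κ : S} {g : S[X]} (hκ : v (algebraMap S L κ) ≤ 1)
    (hg : GaussNormLE (v.comap (algebraMap S L)) c (v (algebraMap S L s)) g
      (v (algebraMap S L (g.eval c / κ))))
    (ht : v (t - algebraMap S L c) < v (algebraMap S L (s * (κ * n ^ 2))))
    (ht' : v' (t' - algebraMap S L' c) < v' (algebraMap S L' (s * (κ * n ^ 2)))) :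
    SameCoset S n (aeval t g) (aeval t' g) := by
  have hequiv := hL.isEquiv_comap hL' hS
  have hg' : GaussNormLE (v'.comap (algebraMap S L')) c (v' (algebraMap S L' s)) g
      (v' (algebraMap S L' (g.eval c / κ))) := hg.of_isEquiv hequiv
  rw [GaussNormLE.comap_iff, map_div₀, ← eval_map_apply] at hg hg'
  obtain ⟨y, hy, h⟩ := hL.hensel.exists_eval_eq_mul_pow (n := n) hκ hg (by simpa using ht)
  obtain ⟨y', hy', h'⟩ := hL'.hensel.exists_eval_eq_mul_pow (n := n)
    (hequiv.le_one_iff_le_one.1 hκ) hg' (by simpa using ht')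
  rw [eval_map_algebraMap, eval_map_apply] at h h'
  exact ⟨g.eval c, y, y', hy, hy', h, h'⟩

theorem exists_sameCoset_of_near (hL : IsPadicLike k v π q) (hL' : IsPadicLike k v' π q)
    (hS : SamePowers S L L') (hroot : RootClosedBelow S L d)
    (ht : t ∉ Set.range (algebraMap S L))
    (hval : ∀ c, ∃ s, v (algebraMap S L s) = v (t - algebraMap S L c))
    (G : Finset S[X]) (hG : ∀ g ∈ G, g.natDegree < d) (hn : 0 < n) :
    ∃ t' : L', ∀ g ∈ G, SameCoset S n (aeval t g) (aeval t' g) := by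
  obtain ⟨κ, c, s, hκ, hs, hκ₁, htc, hg⟩ := hL.exists_near hroot ht hval G hG
    (pow_ne_zero 2 hn.ne')
  have := charZero_of_injective_algebraMap (algebraMap k S).injective
  refine ⟨algebraMap S L' c, fun g hgG => hL.sameCoset_aeval hL' hS hκ₁ (hg g hgG)
    (htc.trans_le ?_) ?_⟩
  · rw [Nat.cast_pow, pow_two κ, mul_assoc κ, mul_left_comm, map_mul, map_mul]
    exact mul_le_of_le_one_left' hκ₁
  · rw [sub_self, map_zero, v'.pos_iff, _root_.map_ne_zero]
    exact mul_ne_zero hs (mul_ne_zero hκ (pow_ne_zero 2 (Nat.cast_ne_zero.2 hn.ne')))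

theorem exists_root_sameCoset_of_near (hL : IsPadicLike k v π q) (hL' : IsPadicLike k v' π q)
    (hS : SamePowers S L L') {f : S[X]} (hroot : RootClosedBelow S L f.natDegree)
    (hf : f ≠ 0) (hft : aeval t f = 0) (ht : t ∉ Set.range (algebraMap S L))
    (hval : ∀ c, ∃ s, v (algebraMap S L s) = v (t - algebraMap S L c))
    (G : Finset S[X]) (hG : ∀ g ∈ G, g.natDegree < f.natDegree) (hn : 0 < n) :
    ∃ t' : L', aeval t' f = 0 ∧ ∀ g ∈ G, SameCoset S n (aeval t g) (aeval t' g) := by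
  classical
  have := charZero_of_injective_algebraMap (algebraMap k S).injective
  have hd : f.natDegree ≠ 0 := by
    intro h
    obtain ⟨a, rfl⟩ := natDegree_eq_zero.1 h
    simp_all
  have hequiv := hL.isEquiv_comap hL' hS
  set D := f.natDegree.factorial with hD
  obtain ⟨κ, c, s, -, -, hκ₁, htc, hg⟩ := hL.exists_near hroot ht hval (insert f.derivative G)
    (Finset.forall_mem_insert _ _ _ |>.2 ⟨natDegree_derivative_lt hd, hG⟩)
    (mul_ne_zero (pow_ne_zero 2 f.natDegree.factorial_ne_zero) (pow_ne_zero 2 hn.ne'))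
  rw [← hD, show κ ^ 2 * ((D ^ 2 * n ^ 2 : ℕ) : S) = (κ * D) ^ 2 * n ^ 2 by push_cast; ring] at htc
  obtain ⟨hf', hg⟩ := Finset.forall_mem_insert _ _ _ |>.1 hg
  set w := v.comap (algebraMap S L) with hw
  have hκ₁ : w κ ≤ 1 := hκ₁
  have hD₁ : w D ≤ 1 := natCast_mem w.integer _
  have hn₁ : w (n ^ 2) ≤ 1 := map_pow w (n : S) 2 ▸ pow_le_one' (natCast_mem w.integer _) 2
  have hμ₁ : w ((κ * D) ^ 2 * n ^ 2) ≤ 1 := by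
    rw [map_mul, map_pow, map_mul]
    exact mul_le_one' (pow_le_one' (mul_le_one' hκ₁ hD₁) 2) hn₁
  obtain ⟨hgauss, hlt⟩ := hf'.of_root hft (derivative_ne_zero.2 hd) rfl hμ₁ htc
  obtain ⟨z, hz, hzc⟩ := hL'.hensel.exists_root_near (hequiv.le_one_iff_le_one.1 hn₁)
    (hgauss.of_isEquiv hequiv) (hequiv.lt_iff_lt.1 hlt)
  refine ⟨z, hz, fun g hgG => hL.sameCoset_aeval hL' hS hκ₁ (hg g hgG)
    (htc.trans_le ?_) (hzc.trans_le ?_)⟩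
  · rw [show s * ((κ * D) ^ 2 * n ^ 2) = s * (κ * n ^ 2) * (κ * D ^ 2) by ring, map_mul, map_mul v]
    refine mul_le_of_le_one_right' ?_
    rw [← Valuation.comap_apply, ← hw, map_mul, map_pow]
    exact mul_le_one' hκ₁ (pow_le_one' hD₁ 2)
  · rw [show s * (κ * D * n ^ 2) = s * (κ * n ^ 2) * D by ring, map_mul, map_mul v']
    exact mul_le_of_le_one_right' (hequiv.le_one_iff_le_one.1 hD₁)

end IsPadicLike

/-- `v a ≪ v b`: the value of `a` is smaller than that of every nonzero `k`-multiple of `b`. -/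
def Negligible (k : Type*) {L Γ : Type*} [Field k] [Field L] [Algebra k L]
    [LinearOrderedCommGroupWithZero Γ] (v : Valuation L Γ) (a b : L) : Prop :=
  ∀ κ : k, κ ≠ 0 → v a < v (b * algebraMap k L κ)

namespace Negligible

variable {k L Γ : Type*} [Field k] [Field L] [Algebra k L] [LinearOrderedCommGroupWithZero Γ]
  {v : Valuation L Γ} {a b c : L}

theorem lt (h : Negligible k v a b) : v a < v b := by
  simpa using h 1 one_ne_zero

theorem ne_zero (h : Negligible k v a b) : b ≠ 0 := fun hb => by simpa [hb] using h.lt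

theorem zero_left (hb : b ≠ 0) : Negligible k v 0 b := fun κ hκ => by
  rw [map_zero, v.pos_iff]
  exact mul_ne_zero hb ((_root_.map_ne_zero _).2 hκ)

theorem mul_algebraMap (h : Negligible k v a b) {κ : k} (hκ : κ ≠ 0) :
    Negligible k v a (b * algebraMap k L κ) := fun μ hμ => by
  rw [mul_assoc, ← map_mul]
  exact h _ (mul_ne_zero hκ hμ)

theorem mul_left_iff (hc : c ≠ 0) : Negligible k v (c * a) (c * b) ↔ Negligible k v a b := by
  refine forall₂_congr fun κ _ => ?_
  rw [mul_assoc, map_mul, map_mul v, mul_lt_mul_iff_right₀ (v.pos_iff.2 hc)]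

theorem pow [Infinite k] {K : ℕ} {π : k} {q : ℕ} (hL : IsPadicLike k v π q)
    (h : Negligible k v a b) (hK : K ≠ 0) : Negligible k v (a ^ K) (b ^ K) := fun κ hκ => by
  obtain ⟨μ, hμ, hμ₁, hμκ⟩ := hL.exists_valuation_lt_one_and_le hκ
  calc v (a ^ K) < v (b * algebraMap k L μ) ^ K := by
        rw [map_pow]
        exact pow_lt_pow_left₀ (h μ hμ) zero_le hK
    _ ≤ v (b ^ K * algebraMap k L κ) := by
        rw [map_mul, map_mul, mul_pow, map_pow]
        gcongr
        exact (pow_le_of_le_one zero_le hμ₁.le hK).trans hμκ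

end Negligible

theorem HasHensel.exists_aeval_eq_dominant_mul_pow {S L Γ : Type*} [CommRing S] [Field L]
    [Algebra S L] [LinearOrderedCommGroupWithZero Γ] {v : Valuation L Γ} (hv : HasHensel v) {s : L}
    {g : S[X]} {l₀ n : ℕ}
    (h : ∀ l, l ≠ l₀ →
      v (algebraMap S L (g.coeff l) * s ^ l) < v (algebraMap S L (g.coeff l₀ * n ^ 2) * s ^ l₀)) :
    ∃ y, y ≠ 0 ∧ aeval s g = algebraMap S L (g.coeff l₀) * s ^ l₀ * y ^ n := by
  have hpos := zero_le.trans_lt (h (l₀ + 1) l₀.succ_ne_self)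
  have hl₀ : l₀ ∈ g.support := mem_support_iff.2 fun h₀ => by simp [h₀] at hpos
  refine hv.exists_eq_mul_pow ?_
  rw [aeval_def, eval₂_eq_sum, sum_def, ← Finset.add_sum_erase _ _ hl₀, add_sub_cancel_left]
  refine (v.map_sum_lt hpos.ne' fun l hl => h l (Finset.ne_of_mem_erase hl)).trans_eq ?_
  simp only [map_mul, map_pow, map_natCast]
  exact mul_right_comm _ _ _

namespace IsPadicLike

section Dominant

variable {k S L Γ : Type*} [Field k] [Field S] [Field L] [Algebra k S] [Algebra k L] [Algebra S L]
  [IsScalarTower k S L] [LinearOrderedCommGroupWithZero Γ] {v : Valuation L Γ} {π : k} {q : ℕ}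

theorem negligible_or_negligible (hL : IsPadicLike k v π q) {x y : L} (hx : x ≠ 0) (hy : y ≠ 0)
    (hxy : ∀ r : k, v x ≠ v (algebraMap k L r * y)) :
    Negligible k v x y ∨ Negligible k v y x := by
  have of_le {a b : L} (hb : b ≠ 0) (hle : v a ≤ v b)
      (hab : ∀ r : k, v a ≠ v (algebraMap k L r * b)) : Negligible k v a b := by
    intro κ hκ
    by_contra! hlt
    obtain ⟨r, hr⟩ := hL.exists_sub_lt hle hb hκ
    rw [← map_mul, v.map_sub_swap] at hr
    exact hab r (v.map_eq_of_sub_lt (hr.trans_le hlt)).symm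
  rcases le_total (v x) (v y) with hle | hle
  · exact .inl (of_le hy hle hxy)
  · refine .inr (of_le hx hle fun r hr => hxy r⁻¹ ?_)
    have hr₀ : algebraMap k L r ≠ 0 := by
      intro h
      simp [h, hy] at hr
    rw [map_mul, hr, map_mul, ← mul_assoc, ← map_mul, map_inv₀, inv_mul_cancel₀ hr₀, map_one,
      one_mul]

theorem negligible_term_or_negligible_term (hL : IsPadicLike k v π q) {s : L} (hs₀ : s ≠ 0) {d : ℕ}
    (hs : ∀ m, 0 < m → m ≤ d → ∀ a, v (algebraMap S L a) ≠ v (s ^ m)) {a b : S} (ha : a ≠ 0)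
    (hb : b ≠ 0) {l l' : ℕ} (hl : l ≤ d) (hl' : l' ≤ d) (hne : l ≠ l') :
    Negligible k v (algebraMap S L a * s ^ l) (algebraMap S L b * s ^ l') ∨
      Negligible k v (algebraMap S L b * s ^ l') (algebraMap S L a * s ^ l) := by
  wlog hlt : l < l' generalizing a b l l'
  · exact (this hb ha hl' hl hne.symm (hne.lt_or_gt.resolve_left hlt)).symm
  obtain ⟨m, rfl⟩ := Nat.exists_eq_add_of_le hlt.le
  have hb' : algebraMap S L b ≠ 0 := (_root_.map_ne_zero _).2 hb
  refine hL.negligible_or_negligible (mul_ne_zero ((_root_.map_ne_zero _).2 ha) (pow_ne_zero l hs₀))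
    (mul_ne_zero hb' (pow_ne_zero (l + m) hs₀)) fun r hr => ?_
  refine hs m (by omega) (by omega) (a / (b * algebraMap k S r)) ?_
  have hr₀ : algebraMap k L r ≠ 0 := by
    intro h
    simp [h, ha, hs₀] at hr
  rw [pow_add, mul_comm (s ^ l), mul_left_comm, ← mul_assoc, ← mul_assoc, map_mul,
    map_mul v _ (s ^ l)] at hr
  rw [map_div₀, map_div₀, map_mul, ← IsScalarTower.algebraMap_apply,
    div_eq_iff (v.ne_zero_iff.2 (mul_ne_zero hb' hr₀)), ← map_mul, mul_comm (s ^ m)]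
  exact mul_right_cancel₀ (v.ne_zero_iff.2 (pow_ne_zero l hs₀)) hr

theorem exists_dominant (hL : IsPadicLike k v π q) {s : L} (hs₀ : s ≠ 0) {g : S[X]} (hg : g ≠ 0)
    (hs : ∀ m, 0 < m → m ≤ g.natDegree → ∀ a, v (algebraMap S L a) ≠ v (s ^ m)) :
    ∃ l₀ ∈ g.support, ∀ l, l ≠ l₀ → Negligible k v (algebraMap S L (g.coeff l) * s ^ l)
      (algebraMap S L (g.coeff l₀) * s ^ l₀) := by
  obtain ⟨l₀, hl₀, hmax⟩ := g.support.exists_max_image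
    (fun l => v (algebraMap S L (g.coeff l) * s ^ l)) (nonempty_support_iff.2 hg)
  refine ⟨l₀, hl₀, fun l hne => ?_⟩
  rw [mem_support_iff] at hl₀
  by_cases hl : g.coeff l = 0
  · rw [hl, map_zero, zero_mul]
    exact .zero_left (mul_ne_zero ((_root_.map_ne_zero _).2 hl₀) (pow_ne_zero _ hs₀))
  refine (hL.negligible_term_or_negligible_term hs₀ hs hl hl₀ (le_natDegree_of_ne_zero hl)
    (le_natDegree_of_ne_zero hl₀) hne).resolve_right fun h => ?_
  exact (hmax l (mem_support_iff.2 hl)).not_gt h.lt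

theorem exists_valuation_pow_eq_of_aeval_eq_zero (hL : IsPadicLike k v π q) {s : L} (hs : s ≠ 0)
    {f : S[X]} (hf : f ≠ 0) (hfs : aeval s f = 0) :
    ∃ m, 0 < m ∧ m ≤ f.natDegree ∧ ∃ a, v (algebraMap S L a) = v (s ^ m) := by
  by_contra! h
  obtain ⟨l₀, hl₀, hdom⟩ := hL.exists_dominant hs hf h
  obtain ⟨y, hy, hfy⟩ := hL.hensel.exists_aeval_eq_dominant_mul_pow (n := 1)
    fun l hl => by simpa using (hdom l hl).lt
  rw [hfs, eq_comm] at hfy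
  exact mul_ne_zero (mul_ne_zero ((_root_.map_ne_zero _).2 (mem_support_iff.1 hl₀))
    (pow_ne_zero _ hs)) (pow_ne_zero 1 hy) hfy

theorem exists_pow_eq_of_valuation_pow_eq [CharZero k] (hL : IsPadicLike k v π q) {s : L}
    (hs : s ≠ 0) {m : ℕ} (hm : 0 < m) {a : S} (h : v (algebraMap S L a) = v (s ^ m)) :
    ∃ (b : S) (r : L), r ^ m = algebraMap S L b ∧ v r = v s := by
  have hm₀ : (m : k) ≠ 0 := Nat.cast_ne_zero.2 hm.ne'
  have ha : algebraMap S L a ≠ 0 := v.ne_zero_iff.1 (h ▸ v.ne_zero_iff.2 (pow_ne_zero m hs))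
  obtain ⟨c, hc⟩ := hL.exists_sub_lt h.ge ha (pow_ne_zero 2 hm₀)
  obtain ⟨y, -, hcy⟩ := hL.hensel.exists_eq_mul_pow (a := algebraMap k L c * algebraMap S L a)
    (b := s ^ m) (n := m) (by simpa [v.map_sub_swap, h] using hc)
  refine ⟨algebraMap k S c * a, s * y, ?_, ?_⟩
  · rw [map_mul, ← IsScalarTower.algebraMap_apply, hcy, mul_pow]
  · have : v (s * y) ^ m = v s ^ m := by
      rw [← map_pow, mul_pow, ← hcy, ← map_pow]
      refine v.map_eq_of_sub_lt ?_
      rw [v.map_sub_swap]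
      refine hc.trans_le ?_
      rw [h]
      refine mul_le_of_le_one_right' ?_
      rw [map_pow, map_pow, map_natCast]
      exact pow_le_one' (natCast_mem v.integer m) 2
    exact (pow_left_inj₀ zero_le zero_le hm.ne').1 this

theorem valuation_pow_ne [CharZero k] (hL : IsPadicLike k v π q) {d : ℕ}
    (hroot : RootClosedBelow S L d) {s : L} (hs : ∀ a, v (algebraMap S L a) ≠ v s) {m : ℕ}
    (hm : 0 < m) (hmd : m < d) (a : S) : v (algebraMap S L a) ≠ v (s ^ m) := by
  intro h
  have hs₀ : s ≠ 0 := fun h₀ => hs 0 (by rw [map_zero, h₀])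
  obtain ⟨b, r, hr, hrs⟩ := hL.exists_pow_eq_of_valuation_pow_eq hs₀ hm h
  obtain ⟨x, rfl⟩ := hroot (X ^ m - C b) (X_pow_sub_C_ne_zero hm b)
    (by rwa [natDegree_X_pow_sub_C]) r (by simp [hr])
  exact hs x hrs

end Dominant

section Transfer

variable {k S L L' Γ Γ' : Type*} [Field k] [CharZero k] [Field S] [Field L] [Field L']
  [Algebra k S] [Algebra k L] [Algebra k L'] [Algebra S L] [Algebra S L'] [IsScalarTower k S L]
  [LinearOrderedCommGroupWithZero Γ] [LinearOrderedCommGroupWithZero Γ']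
  {v : Valuation L Γ} {v' : Valuation L' Γ'} {π : k} {q n d : ℕ} {s : L} {s' : L'}

theorem sameCoset_aeval_of_negligible_lt (hL : IsPadicLike k v π q) (hL' : IsPadicLike k v' π q)
    (hS : SamePowers S L L') (hn : 0 < n) (hss' : SameCoset S n s s') (hs₀ : s ≠ 0) {g : S[X]}
    (hs : ∀ m, 0 < m → m ≤ g.natDegree → ∀ a, v (algebraMap S L a) ≠ v (s ^ m))
    (hlt : ∀ l ∈ g.support, ∀ l₀ ∈ g.support, l ≠ l₀ →
      Negligible k v (algebraMap S L (g.coeff l) * s ^ l)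
        (algebraMap S L (g.coeff l₀ * n ^ 2) * s ^ l₀) →
      v' (algebraMap S L' (g.coeff l) * s' ^ l) <
        v' (algebraMap S L' (g.coeff l₀ * n ^ 2) * s' ^ l₀)) :
    SameCoset S n (aeval s g) (aeval s' g) := by
  rcases eq_or_ne g 0 with rfl | hg
  · simpa using SameCoset.of_algebraMap (L := L) (L' := L') n (0 : S)
  have := charZero_of_injective_algebraMap (algebraMap k S).injective
  have hn₀ : (n : S) ^ 2 ≠ 0 := pow_ne_zero 2 (Nat.cast_ne_zero.2 hn.ne')
  obtain ⟨l₀, hl₀, hdom⟩ := hL.exists_dominant hs₀ hg hs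
  have hdom' (l : ℕ) (hl : l ≠ l₀) : Negligible k v (algebraMap S L (g.coeff l) * s ^ l)
      (algebraMap S L (g.coeff l₀ * n ^ 2) * s ^ l₀) := by
    convert (hdom l hl).mul_algebraMap (pow_ne_zero 2 (Nat.cast_ne_zero.2 hn.ne')) using 1
    simp only [map_mul, map_pow, map_natCast]
    ring
  obtain ⟨y, hy, hsy⟩ := hL.hensel.exists_aeval_eq_dominant_mul_pow fun l hl => (hdom' l hl).lt
  obtain ⟨y', hy', hsy'⟩ := hL'.hensel.exists_aeval_eq_dominant_mul_pow (n := n) (g := g) (s := s')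
    (l₀ := l₀) fun l hl => by
      by_cases hl' : l ∈ g.support
      · exact hlt l hl' l₀ hl₀ hl (hdom' l hl)
      · have hs₀' : s' ≠ 0 := (hss'.eq_zero_iff hS).not.1 hs₀
        rw [notMem_support_iff.1 hl', map_zero, zero_mul, map_zero, v'.pos_iff]
        exact mul_ne_zero ((_root_.map_ne_zero _).2 (mul_ne_zero (mem_support_iff.1 hl₀) hn₀))
          (pow_ne_zero _ hs₀')
  rw [hsy, hsy']
  exact ((SameCoset.of_algebraMap n _).mul (hss'.pow l₀)).mul_pow hy hy'

variable [IsScalarTower k S L']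

theorem exists_pow_eq_root_transfer (hL : IsPadicLike k v π q) (hL' : IsPadicLike k v' π q)
    (hS : SamePowers S L L') (hroot : RootClosedBelow S L d) {r : L} {b : S}
    (hr : r ^ d = algebraMap S L b) (hd : 0 < d) (hvr : ∀ a, v (algebraMap S L a) ≠ v r)
    (G : Finset S[X]) (hG : ∀ g ∈ G, g.natDegree < d) (hn : 0 < n) :
    ∃ r' : L', r' ^ d = algebraMap S L' b ∧ ∀ g ∈ G, SameCoset S n (aeval r g) (aeval r' g) := by
  have hr₀ : r ≠ 0 := fun h₀ => hvr 0 (by rw [map_zero, h₀])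
  obtain ⟨c, y, hy, rfl⟩ := hL.exists_eq_mul_pow hn hr₀
  have hc : c ≠ 0 := by
    rintro rfl
    simp at hr₀
  obtain ⟨y', hy', hby'⟩ := (hS (n * d) (Nat.mul_pos hn hd) (b / algebraMap k S c ^ d)).1
    ⟨y, hy, by
      rw [map_div₀, map_pow, ← IsScalarTower.algebraMap_apply, ← hr, mul_pow, pow_mul,
        mul_div_cancel_left₀ _ (pow_ne_zero d ((_root_.map_ne_zero _).2 hc))]⟩
  have hr' : (algebraMap k L' c * y' ^ n) ^ d = algebraMap S L' b := by
    rw [mul_pow, ← pow_mul, hby', map_div₀, map_pow, ← IsScalarTower.algebraMap_apply,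
      mul_div_cancel₀ _ (pow_ne_zero d ((_root_.map_ne_zero _).2 hc))]
  have hrr' : SameCoset S n (algebraMap k L c * y ^ n) (algebraMap k L' c * y' ^ n) :=
    ⟨algebraMap k S c, y, y', hy, hy', by rw [← IsScalarTower.algebraMap_apply],
      by rw [← IsScalarTower.algebraMap_apply]⟩
  set r := algebraMap k L c * y ^ n
  set r' := algebraMap k L' c * y' ^ n
  have term_pow (a : S) (l : ℕ) :
      (algebraMap S L a * r ^ l) ^ d = algebraMap S L (a ^ d * b ^ l) := by
    rw [mul_pow, pow_right_comm, hr, map_mul, map_pow, map_pow]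
  have term_pow' (a : S) (l : ℕ) :
      (algebraMap S L' a * r' ^ l) ^ d = algebraMap S L' (a ^ d * b ^ l) := by
    rw [mul_pow, pow_right_comm, hr', map_mul, map_pow, map_pow]
  refine ⟨r', hr', fun g hg => hL.sameCoset_aeval_of_negligible_lt hL' hS hn hrr' hr₀
    (fun m hm hmg => hL.valuation_pow_ne hroot hvr hm (hmg.trans_lt (hG g hg)))
    fun l _ l₀ _ _ hneg => ?_⟩
  have hlt := pow_lt_pow_left₀ hneg.lt zero_le hd.ne'
  rw [← map_pow, ← map_pow, term_pow, term_pow] at hlt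
  have hlt' := (hL.isEquiv_comap hL' hS).lt_iff_lt.1 hlt
  rw [Valuation.comap_apply, Valuation.comap_apply, ← term_pow', ← term_pow', map_pow,
    map_pow v'] at hlt'
  exact lt_of_pow_lt_pow_left₀ d zero_le hlt'

theorem exists_sameCoset_pow_eq (hL : IsPadicLike k v π q) (hS : SamePowers S L L') (hs₀ : s ≠ 0)
    {M : ℕ} (hn : 0 < n) (hM : 0 < M) {D : S} (hD : D ≠ 0) :
    ∃ (s' : L') (κ : k), v (algebraMap k L κ) < 1 ∧ κ ≠ 0 ∧ SameCoset S n s s' ∧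
      s' ^ M = algebraMap S L' (D * algebraMap k S κ) := by
  obtain ⟨c, y, hy, rfl⟩ := hL.exists_eq_mul_pow hn hs₀
  obtain ⟨a, w, hw, hDw⟩ := hL.exists_eq_mul_pow (Nat.mul_pos hn hM)
    ((_root_.map_ne_zero (algebraMap S L)).2 hD)
  have hc : c ≠ 0 := by
    rintro rfl
    simp at hs₀
  have ha : a ≠ 0 := by
    rintro rfl
    simp [hD] at hDw
  obtain ⟨w', hw', hDw'⟩ := (hS (n * M) (Nat.mul_pos hn hM) (D / algebraMap k S a)).1
    ⟨w, hw, by rw [map_div₀, hDw, ← IsScalarTower.algebraMap_apply,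
      mul_div_cancel_left₀ _ ((_root_.map_ne_zero _).2 ha)]⟩
  obtain ⟨μ, hμ, hμ₁, hμle⟩ := hL.exists_valuation_lt_one_and_le
    (div_ne_zero ha (pow_ne_zero M hc))
  refine ⟨algebraMap k L' c * (algebraMap k L' μ ^ 2 * w') ^ n,
    (μ ^ 2) ^ (n * M) / (a / c ^ M), ?_, ?_,
    ⟨algebraMap k S c, y, algebraMap k L' μ ^ 2 * w', hy, ?_, ?_, ?_⟩, ?_⟩
  · have hμ_sq_le : v (algebraMap k L μ) ^ 2 ≤ v (algebraMap k L μ) *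
        v (algebraMap k L (a / c ^ M)) := by
      rw [sq]
      gcongr
    rw [map_div₀ (algebraMap k L), map_div₀ v, div_lt_iff₀ (v.pos_iff.2 <|
      (_root_.map_ne_zero _).2 (div_ne_zero ha (pow_ne_zero M hc))), one_mul]
    simp only [map_pow]
    calc (v (algebraMap k L μ) ^ 2) ^ (n * M) ≤ v (algebraMap k L μ) ^ 2 :=
          pow_le_of_le_one zero_le (pow_le_one' hμ₁.le 2) (Nat.mul_pos hn hM).ne'
      _ ≤ v (algebraMap k L μ) * v (algebraMap k L (a / c ^ M)) := hμ_sq_le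
      _ < v (algebraMap k L (a / c ^ M)) := mul_lt_of_lt_one_left (v.pos_iff.2 <|
          (_root_.map_ne_zero _).2 (div_ne_zero ha (pow_ne_zero M hc))) hμ₁
  · exact div_ne_zero (pow_ne_zero _ (pow_ne_zero 2 hμ)) (div_ne_zero ha (pow_ne_zero M hc))
  · exact mul_ne_zero (pow_ne_zero 2 ((_root_.map_ne_zero _).2 hμ)) hw'
  · rw [← IsScalarTower.algebraMap_apply]
  · rw [← IsScalarTower.algebraMap_apply]
  · rw [← mul_div_cancel₀ D ((_root_.map_ne_zero (algebraMap k S)).2 ha), map_mul, map_mul, ← hDw']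
    simp only [← IsScalarTower.algebraMap_apply, map_pow, map_div₀]
    have : algebraMap k L' a ≠ 0 := (_root_.map_ne_zero _).2 ha
    field_simp
    ring

theorem exists_sameCoset_cut (hL : IsPadicLike k v π q) (hL' : IsPadicLike k v' π q)
    (hS : SamePowers S L L') (hs₀ : s ≠ 0) (hs₁ : v s < 1) {M : ℕ} (hn : 0 < n) (hM : 0 < M)
    (hs : ∀ a, v (algebraMap S L a) ≠ v (s ^ M)) (X : Finset S) :
    ∃ s' : L', SameCoset S n s s' ∧ ∀ x ∈ X,
      (Negligible k v (s ^ M) (algebraMap S L x) → v' (s' ^ M) < v' (algebraMap S L' x)) ∧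
      (Negligible k v (algebraMap S L x) (s ^ M) → v' (algebraMap S L' x) < v' (s' ^ M)) := by
  classical
  have hneg₁ : Negligible k v (s ^ M) (algebraMap S L 1) := by
    rw [map_one]
    refine (hL.negligible_or_negligible (pow_ne_zero M hs₀) one_ne_zero fun r hr =>
      hs (algebraMap k S r) ?_).resolve_right fun h => (h.lt.trans_le ?_).false
    · rw [hr, mul_one, ← IsScalarTower.algebraMap_apply]
    · rw [map_pow, map_one]
      exact pow_le_one' hs₁.le M
  obtain ⟨D, hDX, hD⟩ := Finset.exists_min_image
    ((insert 1 X).filter fun x => Negligible k v (s ^ M) (algebraMap S L x))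
    (fun x => v (algebraMap S L x))
    ⟨1, Finset.mem_filter.2 ⟨Finset.mem_insert_self _ _, hneg₁⟩⟩
  rw [Finset.mem_filter] at hDX
  have hDS : D ≠ 0 := by
    rintro rfl
    exact hDX.2.ne_zero (map_zero _)
  obtain ⟨s', κ, hκ₁, hκ, hss', hs'⟩ := hL.exists_sameCoset_pow_eq (L' := L') hS hs₀ hn hM hDS
  refine ⟨s', hss', fun x hx => ?_⟩
  rw [hs', ← Valuation.comap_apply, ← Valuation.comap_apply,
    ← (hL.isEquiv_comap hL' hS).lt_iff_lt, ← (hL.isEquiv_comap hL' hS).lt_iff_lt,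
    Valuation.comap_apply, Valuation.comap_apply, map_mul, ← IsScalarTower.algebraMap_apply]
  refine ⟨fun h => ?_, fun h => (h κ hκ).trans ?_⟩
  · refine lt_of_lt_of_le ?_ (hD x (Finset.mem_filter.2 ⟨Finset.mem_insert_of_mem hx, h⟩))
    rw [map_mul]
    exact mul_lt_of_lt_one_right (v.pos_iff.2 hDX.2.ne_zero) hκ₁
  · rw [map_mul, map_mul v]
    exact mul_lt_mul_of_pos_right hDX.2.lt (v.pos_iff.2 ((_root_.map_ne_zero _).2 hκ))

theorem exists_sameCoset_cuts (hL : IsPadicLike k v π q) (hL' : IsPadicLike k v' π q)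
    (hS : SamePowers S L L') (hs₀ : s ≠ 0) (hs₁ : v s < 1) (hn : 0 < n)
    (hs : ∀ m, 0 < m → ∀ a, v (algebraMap S L a) ≠ v (s ^ m)) (X : Finset S) (d : ℕ) :
    ∃ s' : L', SameCoset S n s s' ∧ ∀ x ∈ X, ∀ m, 0 < m → m ≤ d →
      (Negligible k v (s ^ m) (algebraMap S L x) → v' (s' ^ m) < v' (algebraMap S L' x)) ∧
      (Negligible k v (algebraMap S L x) (s ^ m) → v' (algebraMap S L' x) < v' (s' ^ m)) := by
  classical
  obtain ⟨s', hss', h⟩ := hL.exists_sameCoset_cut hL' hS hs₀ hs₁ hn d.factorial_pos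
    (hs _ d.factorial_pos) ((X ×ˢ Finset.Icc 1 d).image fun x => x.1 ^ (d.factorial / x.2))
  refine ⟨s', hss', fun x hx m hm hmd => ?_⟩
  have hK : d.factorial = m * (d.factorial / m) :=
    (Nat.mul_div_cancel' (Nat.dvd_factorial hm hmd)).symm
  have hK₀ : d.factorial / m ≠ 0 := fun h₀ => d.factorial_ne_zero (by rw [hK, h₀, mul_zero])
  have := h _ (Finset.mem_image_of_mem _
    (Finset.mk_mem_product hx (Finset.mem_Icc.2 ⟨Nat.succ_le_of_lt hm, hmd⟩)))
  dsimp only at this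
  generalize d.factorial / m = K at *
  rw [hK, pow_mul, pow_mul, map_pow, map_pow (algebraMap S L'), map_pow v' (s' ^ m),
    map_pow v' (algebraMap S L' x)] at this
  exact ⟨fun h => lt_of_pow_lt_pow_left₀ K zero_le (this.1 (h.pow hL hK₀)),
    fun h => lt_of_pow_lt_pow_left₀ K zero_le (this.2 (h.pow hL hK₀))⟩

theorem exists_sameCoset_term_lt (hL : IsPadicLike k v π q) (hL' : IsPadicLike k v' π q)
    (hS : SamePowers S L L') (hs₀ : s ≠ 0) (hs₁ : v s < 1) (hn : 0 < n)
    (hs : ∀ m, 0 < m → ∀ a, v (algebraMap S L a) ≠ v (s ^ m)) (A : Finset S) (d : ℕ) :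
    ∃ s' : L', SameCoset S n s s' ∧ ∀ a ∈ A, ∀ b ∈ A, a ≠ 0 → b ≠ 0 →
      ∀ l ≤ d, ∀ l' ≤ d, l ≠ l' →
      Negligible k v (algebraMap S L a * s ^ l) (algebraMap S L b * s ^ l') →
      v' (algebraMap S L' a * s' ^ l) < v' (algebraMap S L' b * s' ^ l') := by
  classical
  obtain ⟨s', hss', h⟩ := hL.exists_sameCoset_cuts hL' hS hs₀ hs₁ hn hs
    (Finset.image₂ (· / ·) A A) d
  have hs₀' : s' ≠ 0 := (hss'.eq_zero_iff hS).not.1 hs₀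
  refine ⟨s', hss', fun a ha b hb ha₀ hb₀ l hl l' hl' hne hneg => ?_⟩
  have hφ {c : S} (hc : c ≠ 0) : algebraMap S L c ≠ 0 := (_root_.map_ne_zero _).2 hc
  have hφ' {c : S} (hc : c ≠ 0) : algebraMap S L' c ≠ 0 := (_root_.map_ne_zero _).2 hc
  rcases lt_or_gt_of_ne hne with hlt | hlt
  · obtain ⟨m, rfl⟩ := Nat.exists_eq_add_of_le hlt.le
    have hlt := (h (a / b) (Finset.mem_image₂_of_mem ha hb) m (by omega) (by omega)).2
    have hc : algebraMap S L b * s ^ l ≠ 0 := mul_ne_zero (hφ hb₀) (pow_ne_zero l hs₀)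
    have hc' : algebraMap S L' b * s' ^ l ≠ 0 := mul_ne_zero (hφ' hb₀) (pow_ne_zero l hs₀')
    rw [← Negligible.mul_left_iff hc, ← mul_lt_mul_iff_right₀ (v'.pos_iff.2 hc'), ← map_mul,
      ← map_mul] at hlt
    convert hlt ?_ using 2
    · rw [map_div₀]; field_simp [hφ' hb₀]
    · ring
    · convert hneg using 1
      · rw [map_div₀]; field_simp [hφ hb₀]
      · ring
  · obtain ⟨m, rfl⟩ := Nat.exists_eq_add_of_le hlt.le
    have hlt := (h (b / a) (Finset.mem_image₂_of_mem hb ha) m (by omega) (by omega)).1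
    have hc : algebraMap S L a * s ^ l' ≠ 0 := mul_ne_zero (hφ ha₀) (pow_ne_zero l' hs₀)
    have hc' : algebraMap S L' a * s' ^ l' ≠ 0 := mul_ne_zero (hφ' ha₀) (pow_ne_zero l' hs₀')
    rw [← Negligible.mul_left_iff hc, ← mul_lt_mul_iff_right₀ (v'.pos_iff.2 hc'), ← map_mul,
      ← map_mul] at hlt
    convert hlt ?_ using 2
    · ring
    · rw [map_div₀]; field_simp [hφ' ha₀]
    · convert hneg using 1
      · ring
      · rw [map_div₀]; field_simp [hφ ha₀]

theorem exists_transfer_of_gap_of_lt_one (hL : IsPadicLike k v π q) (hL' : IsPadicLike k v' π q)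
    (hS : SamePowers S L L') (hs₀ : s ≠ 0) (hs₁ : v s < 1)
    (hs : ∀ m, 0 < m → ∀ a, v (algebraMap S L a) ≠ v (s ^ m)) (G : Finset S[X]) (hn : 0 < n) :
    ∃ s' : L', ∀ g ∈ G, SameCoset S n (aeval s g) (aeval s' g) := by
  classical
  have := charZero_of_injective_algebraMap (algebraMap k S).injective
  obtain ⟨s', hss', h⟩ := hL.exists_sameCoset_term_lt hL' hS hs₀ hs₁ hn hs
    (G.biUnion fun g => g.coeffs ∪ g.coeffs.image (· * (n : S) ^ 2)) (G.sup natDegree)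
  have coeff_le {g : S[X]} {l : ℕ} (hg : g ∈ G) (hl : l ∈ g.support) : l ≤ G.sup natDegree :=
    (le_natDegree_of_mem_supp l hl).trans (Finset.le_sup (f := natDegree) hg)
  refine ⟨s', fun g hg => hL.sameCoset_aeval_of_negligible_lt hL' hS hn hss' hs₀
    (fun m hm _ => hs m hm) fun l hl l₀ hl₀ hne => h _ ?_ _ ?_ (mem_support_iff.1 hl)
    (mul_ne_zero (mem_support_iff.1 hl₀) (pow_ne_zero 2 (Nat.cast_ne_zero.2 hn.ne')))
    l (coeff_le hg hl) l₀ (coeff_le hg hl₀) hne⟩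
  · exact Finset.mem_biUnion.2 ⟨g, hg, Finset.mem_union_left _
      (coeff_mem_coeffs (mem_support_iff.1 hl))⟩
  · exact Finset.mem_biUnion.2 ⟨g, hg, Finset.mem_union_right _
      (Finset.mem_image_of_mem _ (coeff_mem_coeffs (mem_support_iff.1 hl₀)))⟩

theorem exists_transfer_of_gap (hL : IsPadicLike k v π q) (hL' : IsPadicLike k v' π q)
    (hS : SamePowers S L L') (hs : ∀ m, 0 < m → ∀ a, v (algebraMap S L a) ≠ v (s ^ m))
    (G : Finset S[X]) (hn : 0 < n) :
    ∃ s' : L', ∀ g ∈ G, SameCoset S n (aeval s g) (aeval s' g) := by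
  classical
  have hs₀ : s ≠ 0 := by
    rintro rfl
    exact hs 1 one_pos 0 (by simp)
  rcases lt_or_gt_of_ne (fun h => hs 1 one_pos 1 (by simp [h]) : v s ≠ 1) with hs₁ | hs₁
  · exact hL.exists_transfer_of_gap_of_lt_one hL' hS hs₀ hs₁ hs G hn
  obtain ⟨s', h⟩ := hL.exists_transfer_of_gap_of_lt_one hL' hS (inv_ne_zero hs₀)
    (by rw [map_inv₀]; exact inv_lt_one_of_one_lt₀ hs₁)
    (fun m hm a h => hs m hm a⁻¹ (by rw [map_inv₀, map_inv₀, h, inv_pow, map_inv₀, inv_inv]))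
    (insert X (G.image reverse)) hn
  rw [Finset.forall_mem_insert, aeval_X, aeval_X, Finset.forall_mem_image] at h
  refine ⟨s'⁻¹, fun g hg => ?_⟩
  simpa using SameCoset.aeval_inv hn (inv_ne_zero hs₀)
    ((h.1.eq_zero_iff hS).not.1 (inv_ne_zero hs₀)) h.1 (h.2 hg)

end Transfer

end IsPadicLike

namespace IsPadicLike

section RootTransfer

variable {k S L L' Γ Γ' : Type*} [Field k] [CharZero k] [Field S] [Field L] [Field L']
  [Algebra k S] [Algebra k L] [Algebra k L'] [Algebra S L] [Algebra S L'] [IsScalarTower k S L]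
  [IsScalarTower k S L'] [LinearOrderedCommGroupWithZero Γ] [LinearOrderedCommGroupWithZero Γ']
  {v : Valuation L Γ} {v' : Valuation L' Γ'} {π : k} {q : ℕ}

/-- In the near case `p = f`; otherwise `p` is a pure polynomial `X ^ d - b`. -/
theorem exists_root_transfer (hL : IsPadicLike k v π q) (hL' : IsPadicLike k v' π q)
    (hS : SamePowers S L L') {f : S[X]} (hf : f.Monic) (hroot : RootClosedBelow S L f.natDegree)
    {x : L} (hfx : aeval x f = 0) (hx : x ∉ Set.range (algebraMap S L)) :
    ∃ p : S[X], p.Monic ∧ ∃ r : L, aeval r p = 0 ∧ r ∉ Set.range (algebraMap S L) ∧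
      ∀ G : Finset S[X], (∀ g ∈ G, g.natDegree < p.natDegree) → ∀ n, 0 < n →
        ∃ r' : L', aeval r' p = 0 ∧ ∀ g ∈ G, SameCoset S n (aeval r g) (aeval r' g) := by
  by_cases hval : ∀ c, ∃ s, v (algebraMap S L s) = v (x - algebraMap S L c)
  · exact ⟨f, hf, x, hfx, hx, fun G hG n hn =>
      hL.exists_root_sameCoset_of_near hL' hS hroot hf.ne_zero hfx hx hval G hG hn⟩
  push Not at hval
  obtain ⟨c, hc⟩ := hval
  have hs : x - algebraMap S L c ≠ 0 := sub_ne_zero.2 fun h => hx ⟨c, h.symm⟩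
  obtain ⟨m, hm, hmf, a, ha⟩ := hL.exists_valuation_pow_eq_of_aeval_eq_zero hs
    (f := taylor c f) (by simpa using hf.ne_zero) (by
      rw [aeval_def, ← eval_map, map_taylor, taylor_eval, sub_add_cancel, eval_map, ← aeval_def,
        hfx])
  obtain rfl | hmf := (hmf.trans_eq (natDegree_taylor f c)).eq_or_lt
  · obtain ⟨b, r, hr, hrv⟩ := hL.exists_pow_eq_of_valuation_pow_eq hs hm ha
    refine ⟨X ^ f.natDegree - C b, monic_X_pow_sub_C b hm.ne', r, by simp [hr],
      fun ⟨z, hz⟩ => hc z (by rw [hz, hrv]), fun G hG n hn => ?_⟩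
    rw [natDegree_X_pow_sub_C] at hG
    obtain ⟨r', hr', h⟩ := hL.exists_pow_eq_root_transfer hL' hS hroot hr hm
      (fun a => hrv ▸ hc a) G hG hn
    exact ⟨r', by simp [hr'], h⟩
  · exact absurd ha (hL.valuation_pow_ne hroot hc hm hmf a)

theorem exists_transfer_of_rootClosed (hL : IsPadicLike k v π q) (hL' : IsPadicLike k v' π q)
    (hS : SamePowers S L L') (hroot : ∀ d, RootClosedBelow S L d) (G : Finset S[X]) {n : ℕ}
    (hn : 0 < n) (t : L) : ∃ t' : L', ∀ g ∈ G, SameCoset S n (aeval t g) (aeval t' g) := by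
  classical
  by_cases ht : t ∈ Set.range (algebraMap S L)
  · obtain ⟨z, rfl⟩ := ht
    refine ⟨algebraMap S L' z, fun g _ => ?_⟩
    rw [aeval_algebraMap_apply, aeval_algebraMap_apply]
    exact .of_algebraMap n _
  by_cases hval : ∀ c, ∃ s, v (algebraMap S L s) = v (t - algebraMap S L c)
  · exact hL.exists_sameCoset_of_near hL' hS (hroot (G.sup natDegree + 1)) ht hval G
      (fun g hg => Nat.lt_succ_of_le (Finset.le_sup hg)) hn
  push Not at hval
  obtain ⟨c, hc⟩ := hval
  obtain ⟨s', h⟩ := hL.exists_transfer_of_gap hL' hS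
    (fun m hm a => hL.valuation_pow_ne (hroot (m + 1)) hc hm m.lt_succ_self a)
    (G.image (taylor c)) hn
  refine ⟨s' + algebraMap S L' c, fun g hg => ?_⟩
  have := h _ (Finset.mem_image_of_mem _ hg)
  rwa [aeval_def, aeval_def, ← eval_map, ← eval_map, map_taylor, map_taylor, taylor_eval,
    taylor_eval, sub_add_cancel, eval_map, eval_map, ← aeval_def, ← aeval_def] at this

end RootTransfer

end IsPadicLike

theorem exists_root_forall_sameCoset {S L L' : Type*} [CommRing S] [Field L] [Field L']
    [Algebra S L] [Algebra S L'] {f : S[X]} (hf : f.map (algebraMap S L') ≠ 0) {t : L}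
    (H : ∀ G : Finset S[X], (∀ g ∈ G, g.natDegree < f.natDegree) → ∀ n, 0 < n →
      ∃ t' : L', aeval t' f = 0 ∧ ∀ g ∈ G, SameCoset S n (aeval t g) (aeval t' g)) :
    ∃ t' : L', aeval t' f = 0 ∧ ∀ n, 0 < n → ∀ g : S[X], g.natDegree < f.natDegree →
      SameCoset S n (aeval t g) (aeval t' g) := by
  classical
  by_contra! hcon
  choose! n hn g hg hng using hcon
  have hroot {t' : L'} (ht' : t' ∈ f.rootSet L') : aeval t' f = 0 := (mem_rootSet'.1 ht').2
  obtain ⟨t', ht', hG⟩ := H ((f.rootSet L').toFinset.image g)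
    (Finset.forall_mem_image.2 fun x hx => hg x (hroot (Set.mem_toFinset.1 hx)))
    (∏ x ∈ (f.rootSet L').toFinset, n x)
    (Finset.prod_pos fun x hx => hn x (hroot (Set.mem_toFinset.1 hx)))
  have hmem : t' ∈ (f.rootSet L').toFinset := Set.mem_toFinset.2 (mem_rootSet'.2 ⟨hf, ht'⟩)
  exact hng t' ht' ((hG _ (Finset.mem_image_of_mem g hmem)).of_dvd (Finset.dvd_prod_of_mem n hmem))

/-- A `k`-algebra in `L × L'` whose two projections have the same nonzero powers. Those which are
maximal turn out to be graphs of isomorphisms between subfields of `L` and `L'` which are relatively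
algebraically closed in `L`. -/
def IsMatching {k L L' : Type*} [Field k] [Field L] [Field L'] [Algebra k L] [Algebra k L']
    (M : Subalgebra k (L × L')) : Prop :=
  ∀ n, 0 < n → ∀ z ∈ M, IsNonzeroPow n z.1 ↔ IsNonzeroPow n z.2

namespace IsMatching

variable {k L L' : Type*} [Field k] [Field L] [Field L'] [Algebra k L] [Algebra k L']
  {M : Subalgebra k (L × L')}

theorem exists_maximal (hM : IsMatching M) : ∃ N, M ≤ N ∧ Maximal IsMatching N := by
  refine zorn_le_nonempty₀ {N | IsMatching N} (fun c hc hchain y hy =>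
    ⟨sSup c, fun n hn z hz => ?_, fun z hz => le_sSup hz⟩) M hM
  have : Nonempty c := ⟨y, hy⟩
  rw [sSup_eq_iSup', ← SetLike.mem_coe,
    Subalgebra.coe_iSup_of_directed hchain.directedOn.directed_val, Set.mem_iUnion] at hz
  obtain ⟨N, hzN⟩ := hz
  exact hc N.2 n hn z hzN

local instance : Algebra M L := ((AlgHom.fst k L L').comp M.val).toAlgebra

local instance : Algebra M L' := ((AlgHom.snd k L L').comp M.val).toAlgebra

local instance : IsScalarTower k M L := .of_algebraMap_eq fun _ => rfl

local instance : IsScalarTower k M L' := .of_algebraMap_eq fun _ => rfl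

theorem samePowers (hM : IsMatching M) : SamePowers M L L' := fun n hn z => hM n hn z z.2

theorem mem_of_forall_sameCoset (hM : Maximal IsMatching M) {t : L} {t' : L'}
    (h : ∀ n, 0 < n → ∀ g : M[X], SameCoset M n (aeval t g) (aeval t' g)) : (t, t') ∈ M := by
  have aeval_pair (g : M[X]) : aeval (t, t') g = (aeval t g, aeval t' g) := by
    induction g using Polynomial.induction_on' with
    | add p q hp hq => simp [hp, hq]
    | monomial n a => simp [aeval_monomial]; rfl
  refine hM.le_of_ge (y := (aeval (R := M) (t, t')).range.restrictScalars k) ?_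
    (fun x hx => ⟨C ⟨x, hx⟩, aeval_C _ _⟩) ⟨X, by simp⟩
  rintro n hn - ⟨g, rfl⟩
  rw [AlgHom.toRingHom_eq_coe, RingHom.coe_coe, aeval_pair]
  exact (h n hn g).isNonzeroPow_iff hM.prop.samePowers hn

theorem isUnit_or_eq_zero (hM : Maximal IsMatching M) (z : M) : IsUnit z ∨ z = 0 := by
  have hz : z.1.1 = 0 ↔ z.1.2 = 0 :=
    (SameCoset.of_algebraMap 1 z).eq_zero_iff hM.prop.samePowers
  refine or_iff_not_imp_right.2 fun h => ?_
  have h₁ : z.1.1 ≠ 0 := fun h₁ => h (Subtype.ext (Prod.ext h₁ (hz.1 h₁)))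
  have h₂ : z.1.2 ≠ 0 := hz.not.1 h₁
  have hmem : (z.1.1⁻¹, z.1.2⁻¹) ∈ M := mem_of_forall_sameCoset hM fun n hn g =>
    (SameCoset.of_algebraMap n z).aeval_inv hn h₁ h₂ <| by
      convert SameCoset.of_algebraMap (L := L) (L' := L') n (aeval z g.reverse) using 1
      exacts [aeval_algebraMap_apply L z _, aeval_algebraMap_apply L' z _]
  exact .of_mul_eq_one ⟨_, hmem⟩ (Subtype.ext (Prod.ext (mul_inv_cancel₀ h₁) (mul_inv_cancel₀ h₂)))

theorem mem_range_of_root_transfer (hM : Maximal IsMatching M) {p : M[X]} (hp : p.Monic) {r : L}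
    (hr : aeval r p = 0)
    (H : ∀ G : Finset M[X], (∀ g ∈ G, g.natDegree < p.natDegree) → ∀ n, 0 < n →
      ∃ r' : L', aeval r' p = 0 ∧ ∀ g ∈ G, SameCoset M n (aeval r g) (aeval r' g)) :
    r ∈ Set.range (algebraMap M L) := by
  obtain ⟨r', hr', h⟩ := exists_root_forall_sameCoset (hp.map _).ne_zero H
  have hp₁ : p ≠ 1 := by
    rintro rfl
    simp at hr
  refine ⟨⟨(r, r'), mem_of_forall_sameCoset hM fun n hn g => ?_⟩, rfl⟩
  have := h n hn _ (natDegree_modByMonic_lt g hp hp₁)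
  rwa [aeval_modByMonic_eq_self_of_root hr, aeval_modByMonic_eq_self_of_root hr'] at this

variable [CharZero k] {Γ Γ' : Type*} [LinearOrderedCommGroupWithZero Γ]
  [LinearOrderedCommGroupWithZero Γ'] {v : Valuation L Γ} {v' : Valuation L' Γ'} {π : k} {q : ℕ}

theorem rootClosedBelow (hM : Maximal IsMatching M) (hL : IsPadicLike k v π q)
    (hL' : IsPadicLike k v' π q) (d : ℕ) : RootClosedBelow M L d := by
  let := Field.ofIsUnitOrEqZero (isUnit_or_eq_zero hM)
  induction d with
  | zero => exact fun g _ hg => absurd hg (Nat.not_lt_zero _)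
  | succ d ih =>
    intro g hg hgd x hx
    by_contra hxM
    obtain ⟨p, hp, r, hr, hrM, H⟩ := hL.exists_root_transfer hL' hM.prop.samePowers
      (monic_mul_leadingCoeff_inv hg) (fun h hh hhd => ih h hh (hhd.trans_le (by
        rw [natDegree_mul_leadingCoeff_inv g hg]
        exact Nat.le_of_lt_succ hgd))) (x := x) (by simp [hx]) hxM
    exact hrM (mem_range_of_root_transfer hM hp hr H)

theorem _root_.IsPadicLike.exists_transfer {k R L L' Γ Γ' : Type*} [Field k] [CharZero k]
    [CommRing R] [Field L] [Field L'] [Algebra k R] [Algebra k L] [Algebra k L'] [Algebra R L]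
    [Algebra R L'] [IsScalarTower k R L] [IsScalarTower k R L'] [LinearOrderedCommGroupWithZero Γ]
    [LinearOrderedCommGroupWithZero Γ'] {v : Valuation L Γ} {v' : Valuation L' Γ'} {π : k} {q : ℕ}
    (hL : IsPadicLike k v π q) (hL' : IsPadicLike k v' π q) (hR : SamePowers R L L')
    (G : Finset R[X]) {n : ℕ} (hn : 0 < n) (t : L) :
    ∃ t' : L', ∀ g ∈ G, ∀ m, m ∣ n →
      (IsNonzeroPow m (aeval t g) ↔ IsNonzeroPow m (aeval t' g)) := by
  classical
  let φ := (IsScalarTower.toAlgHom k R L).prod (IsScalarTower.toAlgHom k R L')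
  obtain ⟨M, hRM, hM⟩ := IsMatching.exists_maximal (M := φ.range) (by
    rintro n hn - ⟨r, rfl⟩
    exact hR n hn r)
  let := Field.ofIsUnitOrEqZero (IsMatching.isUnit_or_eq_zero hM)
  let ψ : R →+* M := (φ.codRestrict M fun r => hRM ⟨r, rfl⟩).toRingHom
  obtain ⟨t', h⟩ := hL.exists_transfer_of_rootClosed hL' hM.prop.samePowers
    (IsMatching.rootClosedBelow hM hL hL') (G.image (map ψ)) hn t
  refine ⟨t', fun g hg m hmn => ?_⟩
  have := ((h _ (Finset.mem_image_of_mem _ hg)).of_dvd hmn).isNonzeroPow_iff hM.prop.samePowers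
    (Nat.pos_of_dvd_of_pos hmn hn)
  rwa [aeval_def, aeval_def, eval₂_map, eval₂_map] at this

end IsMatching

section Ultrapower

open Filter

variable {k X K Γ : Type*} [Field k] [Field K] [Algebra k K] {U : Ultrafilter X}
  [LinearOrderedCommGroupWithZero Γ] {v : Valuation K Γ} {f g : X → K} {n : ℕ}

/-- The ultrapower of a `k`-algebra, with `k` acting through constant functions. -/
noncomputable instance germAlgebra : Algebra k ((U : Filter X).Germ K) where
  algebraMap := (Germ.coeRingHom (U : Filter X)).comp (algebraMap k (X → K))
  commutes' _ _ := mul_comm _ _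
  smul_def' c f := Germ.inductionOn f fun f => by
    rw [← Germ.coe_smul, Algebra.smul_def]
    rfl

theorem isNonzeroPow_coe_iff :
    IsNonzeroPow n (f : (U : Filter X).Germ K) ↔ ∀ᶠ x in U, IsNonzeroPow n (f x) := by
  simp only [IsNonzeroPow, skolem, eventually_and, Ultrafilter.eventually_not]
  refine (Function.Surjective.exists Quotient.mk_surjective).trans (exists_congr fun y => ?_)
  exact and_congr (not_congr Germ.coe_eq) Germ.coe_eq

variable (U v) in
/-- The valuation ring of the ultrapower of a valued field. -/
noncomputable def germValuationSubring : ValuationSubring ((U : Filter X).Germ K) where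
  carrier := {f | f.LiftPred fun a => v a ≤ 1}
  mul_mem' {f g} := Germ.inductionOn₂ f g fun f g hf hg => by
    filter_upwards [hf, hg] with x hf hg using (map_mul v _ _).trans_le (mul_le_one' hf hg)
  add_mem' {f g} := Germ.inductionOn₂ f g fun f g hf hg => by
    filter_upwards [hf, hg] with x hf hg using (v.map_add _ _).trans (max_le hf hg)
  neg_mem' {f} := Germ.inductionOn f fun f hf => by
    filter_upwards [hf] with x hf using (v.map_neg _).trans_le hf
  one_mem' := Eventually.of_forall fun _ => (map_one v).le
  zero_mem' := Eventually.of_forall fun _ => (map_zero v).trans_le zero_le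
  mem_or_inv_mem' f := Germ.inductionOn f fun f => by
    refine Ultrafilter.eventually_or.1 (Eventually.of_forall fun x => ?_)
    rcases le_total (v (f x)) 1 with h | h
    · exact Or.inl h
    · exact Or.inr (by simpa using inv_le_one_of_one_le₀ h)

variable (U v) in
/-- The valuation of the ultrapower of a valued field. -/
noncomputable abbrev germValuation :=
  (germValuationSubring U v).valuation

theorem germValuation_le_iff : germValuation U v f ≤ germValuation U v g ↔
    ∀ᶠ x in U, v (f x) ≤ v (g x) := by
  rw [ValuationSubring.valuation_le_iff]
  constructor
  · rintro ⟨⟨a, ha : a.LiftPred fun a => v a ≤ 1⟩, h⟩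
    induction a using Germ.inductionOn with | h a
    rw [← Germ.coe_mul, Germ.coe_eq] at h
    filter_upwards [h, Germ.liftPred_coe.1 ha] with x hx ha
    rw [← hx, Pi.mul_apply, map_mul]
    exact mul_le_of_le_one_left' ha
  · intro h
    refine ⟨⟨((f / g : X → K) : (U : Filter X).Germ K), ?_⟩, ?_⟩
    · filter_upwards [h] with x hx
      rw [Pi.div_apply, map_div₀]
      exact div_le_one_of_le₀ hx zero_le
    · rw [← Germ.coe_mul, Germ.coe_eq]
      filter_upwards [h] with x hx
      by_cases hg : g x = 0
      · rw [hg, map_zero, le_zero_iff, Valuation.zero_iff] at hx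
        simp [hg, hx]
      · simp [hg]

theorem germValuation_lt_iff : germValuation U v f < germValuation U v g ↔
    ∀ᶠ x in U, v (f x) < v (g x) := by
  simp_rw [← not_le, Ultrafilter.eventually_not, germValuation_le_iff]

theorem germValuation_le_one_iff : germValuation U v f ≤ 1 ↔ ∀ᶠ x in U, v (f x) ≤ 1 := by
  rw [← map_one (germValuation U v)]
  exact germValuation_le_iff.trans (by simp)

theorem germValuation_lt_one_iff : germValuation U v f < 1 ↔ ∀ᶠ x in U, v (f x) < 1 := by
  rw [← map_one (germValuation U v)]
  exact germValuation_lt_iff.trans (by simp)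

theorem HasHensel.germ (hv : HasHensel v) : HasHensel (germValuation U v) := fun h h₀ h₁ hj => by
  obtain ⟨g, rfl⟩ := Polynomial.map_surjective (Germ.coeRingHom (U : Filter X))
    Quotient.mk_surjective h
  simp only [coeff_map] at h₀ h₁ hj
  have coeff_lt : ∀ᶠ x in U, ∀ j ∈ Finset.Icc 2 g.natDegree, v (g.coeff j x) < 1 :=
    (eventually_all_finset _).2 fun j hj' =>
      germValuation_lt_one_iff.1 (hj j (Finset.mem_Icc.1 hj').1)
  have hroot : ∀ᶠ x in U, ∃ z, (g.map (Pi.evalRingHom (fun _ => K) x)).eval z = 0 ∧ v z ≤ 1 := by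
    filter_upwards [Germ.coe_eq.1 h₀, Germ.coe_eq.1 h₁, coeff_lt] with x hx₀ hx₁ hx
    refine hv _ (by simpa using hx₀) (by simpa using hx₁) fun j hj => ?_
    rw [coeff_map]
    by_cases hjd : j ≤ g.natDegree
    · exact hx j (Finset.mem_Icc.2 ⟨hj, hjd⟩)
    · simp [coeff_eq_zero_of_natDegree_lt (not_le.1 hjd)]
  obtain ⟨z, hz⟩ := skolem.1 hroot
  refine ⟨Germ.coeRingHom _ z, ?_, germValuation_le_one_iff.2 (hz.mono fun x hx => hx.2)⟩
  rw [eval_map_apply, ← map_zero (Germ.coeRingHom (U : Filter X))]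
  refine Germ.coe_eq.2 (hz.mono fun x hx => ?_)
  have := hx.1
  rwa [show z x = Pi.evalRingHom (fun _ => K) x z from rfl, eval_map_apply] at this

theorem IsPadicLike.germ {π : k} {q : ℕ} (hK : IsPadicLike k v π q) :
    IsPadicLike k (germValuation U v) π q where
  hensel := hK.hensel.germ
  exists_finset_sub_lt κ hκ := by
    obtain ⟨T, hT⟩ := hK.exists_finset_sub_lt κ hκ
    refine ⟨T, fun u hu => ?_⟩
    induction u using Germ.inductionOn with | h u
    have : ∀ᶠ x in U, ∃ r ∈ (T : Set k), v (u x - algebraMap k K r) < v (algebraMap k K κ) := by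
      filter_upwards [germValuation_le_one_iff.1 hu] with x hx using hT _ hx
    obtain ⟨r, hrT, hr⟩ := (Ultrafilter.eventually_exists_mem_iff T.finite_toSet).1 this
    exact ⟨r, hrT, germValuation_lt_iff.2 hr⟩
  exists_le_mul_pow n hn := by
    obtain ⟨κ, hκ, h⟩ := hK.exists_le_mul_pow n hn
    refine ⟨κ, hκ, fun u hu => ?_⟩
    induction u using Germ.inductionOn with | h u
    obtain ⟨y, hy⟩ := skolem.1 <|
      (Ultrafilter.eventually_not.2 (mt Germ.coe_eq.2 hu)).mono fun x hx => h (u x) hx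
    exact ⟨y, germValuation_le_iff.2 (hy.mono fun x hx => hx.1),
      germValuation_le_one_iff.2 (hy.mono fun x hx => hx.2)⟩
  le_one_iff u := by
    induction u using Germ.inductionOn with | h u
    refine germValuation_le_one_iff.trans ((eventually_congr (.of_forall fun x => ?_)).trans
      isNonzeroPow_coe_iff.symm)
    exact hK.le_one_iff (u x)
  pos := hK.pos

end Ultrapower

section DiscreteValuation

open scoped WithZero

variable {L : Type*} [Field L] {v : Valuation L ℤᵐ⁰} {x π : L} {n q : ℕ}

theorem exists_valuation_mul_pow_bounds (hπ : v π = WithZero.exp (-1)) (hn : 0 < n) (hx : x ≠ 0) :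
    ∃ y, v (π ^ n) ≤ v (x * y ^ n) ∧ v (x * y ^ n) ≤ 1 := by
  have hn' : (0 : ℤ) < n := by exact_mod_cast hn
  set m := (v x).log
  have hxy : v (x * (π ^ (m / n + 1)) ^ n) = WithZero.exp (m % n - n) := by
    rw [map_mul, map_pow, map_zpow₀, hπ, ← WithZero.exp_log (v.ne_zero_iff.2 hx),
      ← WithZero.exp_zsmul, ← WithZero.exp_nsmul, ← WithZero.exp_add]
    congr 1
    rw [Int.emod_def, smul_eq_mul, nsmul_eq_mul]
    ring
  refine ⟨π ^ (m / n + 1), ?_, ?_⟩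
  · rw [hxy, map_pow, hπ, ← WithZero.exp_nsmul, WithZero.exp_le_exp, nsmul_eq_mul]
    linarith [Int.emod_nonneg m hn'.ne']
  · rw [hxy, ← WithZero.exp_zero, WithZero.exp_le_exp]
    linarith [Int.emod_lt_of_pos m hn']

theorem HasHensel.valuation_le_one_iff (hv : HasHensel v) (hπ : v π = WithZero.exp (-1))
    (hq : 2 ≤ q) (hvq : v (q : L) = 1) : v x ≤ 1 ↔ IsNonzeroPow q (1 + π * x ^ q) := by
  constructor
  · intro hx
    refine hv.exists_eq_pow ?_
    rw [add_sub_cancel_left, hvq, one_pow, map_mul, map_pow, hπ]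
    refine mul_lt_one_of_lt_of_le ?_ (pow_le_one' hx q)
    rw [← WithZero.exp_zero, WithZero.exp_lt_exp]
    norm_num
  · rintro ⟨y, hy, hyq⟩
    by_contra! hx
    have hx₀ : x ≠ 0 := v.ne_zero_iff.1 (zero_lt_one.trans hx).ne'
    obtain ⟨m, hm⟩ : ∃ m, v x = WithZero.exp m := ⟨_, (WithZero.exp_log (v.ne_zero_iff.2 hx₀)).symm⟩
    obtain ⟨l, hl⟩ : ∃ l, v y = WithZero.exp l := ⟨_, (WithZero.exp_log (v.ne_zero_iff.2 hy)).symm⟩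
    have hm₁ : 0 < m := by rwa [hm, ← WithZero.exp_zero, WithZero.exp_lt_exp] at hx
    have hπx : v (π * x ^ q) = WithZero.exp (q * m - 1) := by
      rw [map_mul, map_pow, hπ, hm, ← WithZero.exp_nsmul, ← WithZero.exp_add, nsmul_eq_mul]
      congr 1
      ring
    have hlt : v 1 < v (π * x ^ q) := by
      rw [map_one, hπx, ← WithZero.exp_zero, WithZero.exp_lt_exp]
      nlinarith
    have hlm : (q : ℤ) * l = q * m - 1 := by
      have := congrArg v hyq
      rwa [v.map_add_eq_of_lt_right hlt, hπx, map_pow, hl, ← WithZero.exp_nsmul, nsmul_eq_mul,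
        WithZero.exp_inj] at this
    have hdvd : (q : ℤ) ∣ 1 := ⟨m - l, by linarith⟩
    have := Int.le_of_dvd one_pos hdvd
    omega

end DiscreteValuation

section CompleteField

open NNReal

theorem HasHensel.of_isEquiv {L Γ Γ' : Type*} [Field L] [LinearOrderedCommGroupWithZero Γ]
    [LinearOrderedCommGroupWithZero Γ'] {v : Valuation L Γ} {v' : Valuation L Γ'}
    (hv : HasHensel v) (h : v.IsEquiv v') : HasHensel v' := fun g h₀ h₁ hj => by
  obtain ⟨z, hz, hz₁⟩ := hv g h₀ h₁ fun j hj₂ => h.lt_one_iff_lt_one.2 (hj j hj₂)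
  exact ⟨z, hz, h.le_one_iff_le_one.1 hz₁⟩

variable {K : Type*} [NormedField K] [IsUltrametricDist K]

theorem exists_eval_eq_self [CompleteSpace K] {g : K[X]} {c : ℝ≥0} (hc : c < 1)
    (hg : GaussNormLE NormedField.valuation 0 1 (g - C (g.eval 0)) c) (hg₀ : ‖g.eval 0‖ ≤ 1) :
    ∃ z, g.eval z = z ∧ ‖z‖ ≤ 1 := by
  set s := Metric.closedBall (0 : K) 1
  have lipschitz {x y : K} (hx : x ∈ s) (hy : y ∈ s) : ‖g.eval x - g.eval y‖ ≤ c * ‖x - y‖ := by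
    have hxy : ‖x - y‖ ≤ 1 := by
      rw [← dist_eq_norm]
      exact (dist_triangle_max x 0 y).trans (max_le hx (dist_comm y 0 ▸ hy))
    rw [mem_closedBall_zero_iff] at hy
    have h := hg.recenter (c' := y) (ρ' := 1) (by simpa using mod_cast hy) le_rfl
    have := h.eval_sub_le (x := x) (one_mul _).ge (mod_cast hxy)
    rw [eval_sub, eval_sub, eval_C, eval_C, sub_sub_sub_cancel_right] at this
    exact_mod_cast this
  have hmaps : Set.MapsTo (g.eval ·) s s := fun x hx => by
    have hx₀ := lipschitz hx (Metric.mem_closedBall_self zero_le_one)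
    rw [sub_zero] at hx₀
    rw [mem_closedBall_zero_iff] at hx ⊢
    beta_reduce
    rw [← sub_add_cancel (g.eval x) (g.eval 0)]
    exact (IsUltrametricDist.norm_add_le_max _ _).trans
      (max_le (hx₀.trans (mul_le_one₀ (mod_cast hc.le) (norm_nonneg x) hx)) hg₀)
  obtain ⟨z, hz, hfix, -⟩ := ContractingWith.exists_fixedPoint' (K := c)
    Metric.isClosed_closedBall.isComplete hmaps
    ⟨hc, LipschitzWith.of_dist_le_mul fun x y => by
      simpa [Subtype.dist_eq, dist_eq_norm] using lipschitz x.2 y.2⟩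
    (Metric.mem_closedBall_self zero_le_one) (edist_ne_top _ _)
  exact ⟨z, hfix, mem_closedBall_zero_iff.1 hz⟩

/-- A root of `h` is a fixed point of the contraction `z ↦ z - h(z)` of the unit ball. -/
theorem hasHensel_of_completeSpace [CompleteSpace K] :
    HasHensel (NormedField.valuation (K := K)) := fun h h₀ h₁ hj => by
  set v := NormedField.valuation (K := K)
  have hg : (X - h).eval 0 = -1 := by simp [← coeff_zero_eq_eval_zero, h₀]
  set f := X - h - C ((X - h).eval 0) with hf
  have hfj (j : ℕ) : v (f.coeff j) < 1 := by
    match j with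
    | 0 => simp [hf, hg, h₀]
    | 1 => simp [hf, hg, h₁, coeff_one]
    | j + 2 => simpa [hf, hg, coeff_X, coeff_one] using hj (j + 2) (by omega)
  have hfc : GaussNormLE v 0 1 f (f.support.sup fun j => v (f.coeff j)) := fun j => by
    rw [taylor_zero, one_pow, mul_one]
    by_cases hjf : j ∈ f.support
    · exact Finset.le_sup (f := fun j => v (f.coeff j)) hjf
    · simp [notMem_support_iff.1 hjf]
  obtain ⟨z, hz, hz₁⟩ := exists_eval_eq_self
    ((Finset.sup_lt_iff (by simp)).2 fun j _ => hfj j) hfc (by simp [hg])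
  exact ⟨z, by simpa using hz, hz₁⟩

end CompleteField

section Completion

open NumberField

variable {k : Type*} [Field k] [NumberField k] (v : HeightOneSpectrum (RingOfIntegers k))

theorem valuation_isEquiv_valued :
    (NormedField.valuation (K := v.adicCompletion k)).IsEquiv Valued.v := fun x y => by
  have h : ‖x‖ ≤ ‖y‖ ↔ (Valued.v x : WithZero (Multiplicative ℤ)) ≤ Valued.v y := by
    rw [FinitePlace.norm_def, FinitePlace.norm_def, NNReal.coe_le_coe]
    exact (WithZeroMulInt.toNNReal_strictMono (HeightOneSpectrum.one_lt_absNorm_nnreal v)).le_iff_le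
  exact_mod_cast h

theorem valued_algebraMap (a : k) :
    Valued.v (algebraMap k (v.adicCompletion k) a) = v.valuation k a :=
  v.valuedAdicCompletion_eq_valuation' a

theorem exists_finset_valuation_sub_le (N : ℕ) : ∃ T : Finset k, ∀ x, v.valuation k x ≤ 1 →
    ∃ r ∈ T, v.valuation k (x - r) ≤ WithZero.exp (-(N : ℤ)) := by
  classical
  have : Finite (RingOfIntegers k ⧸ v.asIdeal ^ N) :=
    Ideal.finiteQuotientOfFreeOfNeBot _ (pow_ne_zero _ v.ne_bot)
  have := Fintype.ofFinite (RingOfIntegers k ⧸ v.asIdeal ^ N)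
  refine ⟨Finset.univ.image fun c : RingOfIntegers k ⧸ v.asIdeal ^ N =>
    algebraMap _ k (Quotient.out c), fun x hx => ?_⟩
  obtain ⟨a, ha⟩ := v.exists_valuation_sub_lt_of_integer hx
    (Units.mk0 (WithZero.exp (-(N : ℤ))) WithZero.exp_ne_zero)
  set b := Quotient.out (Ideal.Quotient.mk (v.asIdeal ^ N) a)
  refine ⟨algebraMap _ k b, Finset.mem_image_of_mem _ (Finset.mem_univ _), ?_⟩
  have hab : v.valuation k (algebraMap _ k a - algebraMap _ k b) ≤ WithZero.exp (-(N : ℤ)) := by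
    rw [← map_sub, HeightOneSpectrum.valuation_of_algebraMap,
      HeightOneSpectrum.intValuation_le_pow_iff_mem]
    exact Ideal.Quotient.eq.1 (Quotient.out_eq _).symm
  rw [← sub_add_sub_cancel x (algebraMap _ k a)]
  refine (Valuation.map_add _ _ _).trans (max_le ?_ hab)
  rw [Valuation.map_sub_swap]
  exact ha.le

theorem exists_valued_sub_lt (u : v.adicCompletion k) {κ : k} (hκ : κ ≠ 0) :
    ∃ r : k, Valued.v (u - algebraMap k _ r) < v.valuation k κ := by
  obtain ⟨r, hr⟩ := (v.denseRange_algebraMap (K := k)).exists_dist_lt u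
    (norm_pos_iff.2 ((_root_.map_ne_zero (algebraMap k (v.adicCompletion k))).2 hκ))
  refine ⟨r, ?_⟩
  rw [dist_eq_norm] at hr
  exact ((valuation_isEquiv_valued v).lt_iff_lt.1 (mod_cast hr)).trans_eq
    (valued_algebraMap v κ)

theorem exists_finset_valued_sub_lt {κ : k} (hκ : κ ≠ 0) :
    ∃ T : Finset k, ∀ u : v.adicCompletion k, Valued.v u ≤ 1 →
      ∃ r ∈ T, Valued.v (u - algebraMap k _ r) < v.valuation k κ := by
  rcases lt_or_ge 1 (v.valuation k κ) with h | h
  · exact ⟨{0}, fun u hu => ⟨0, by simp, by simpa using hu.trans_lt h⟩⟩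
  obtain ⟨N, hN⟩ : ∃ N : ℕ, WithZero.exp (-(N : ℤ)) < v.valuation k κ := by
    refine ⟨(1 - (v.valuation k κ).log).toNat, ?_⟩
    rw [← WithZero.exp_log ((v.valuation k).ne_zero_iff.2 hκ), WithZero.exp_lt_exp,
      WithZero.log_exp]
    omega
  obtain ⟨T, hT⟩ := exists_finset_valuation_sub_le v N
  refine ⟨T, fun u hu => ?_⟩
  obtain ⟨a, ha⟩ := exists_valued_sub_lt v u hκ
  have ha₁ : v.valuation k a ≤ 1 := by
    rw [← valued_algebraMap, ← sub_sub_cancel u (algebraMap k _ a)]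
    exact (Valuation.map_sub _ _ _).trans (max_le hu (ha.le.trans h))
  obtain ⟨r, hrT, hr⟩ := hT a ha₁
  refine ⟨r, hrT, ?_⟩
  rw [← sub_add_sub_cancel u (algebraMap k _ a), ← map_sub]
  refine Valuation.map_add_lt _ ha ?_
  exact (valued_algebraMap v _).trans_lt (hr.trans_lt hN)

theorem exists_natCast_valuation_eq_one {L Γ : Type*} [Field L] [LinearOrderedCommGroupWithZero Γ]
    (v : Valuation L Γ) : ∃ q : ℕ, 2 ≤ q ∧ v (q : L) = 1 := by
  by_cases h₂ : v (2 : ℕ) = 1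
  · exact ⟨2, le_rfl, h₂⟩
  · refine ⟨3, by norm_num, ?_⟩
    have h₂' : v (2 : ℕ) < v 1 := by
      rw [map_one]
      exact (natCast_mem v.integer 2).lt_of_ne h₂
    rw [Nat.cast_succ, v.map_add_eq_of_lt_right h₂', map_one]

theorem exists_isPadicLike_adicCompletion : ∃ (π : k) (q : ℕ),
    IsPadicLike k (Valued.v : Valuation (v.adicCompletion k) _) π q := by
  obtain ⟨π, hπ⟩ := v.valuation_exists_uniformizer k
  obtain ⟨q, hq, hvq⟩ := exists_natCast_valuation_eq_one
    (Valued.v : Valuation (v.adicCompletion k) _)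
  have hensel : HasHensel (Valued.v : Valuation (v.adicCompletion k) _) :=
    hasHensel_of_completeSpace.of_isEquiv (valuation_isEquiv_valued v)
  have hπ' : Valued.v (algebraMap k (v.adicCompletion k) π) = WithZero.exp (-1) := by
    rw [valued_algebraMap, hπ]
  have hπ₀ : π ≠ 0 := by
    rintro rfl
    exact WithZero.exp_ne_zero (hπ.symm.trans (map_zero _))
  exact ⟨π, q, {
    hensel := hensel
    exists_finset_sub_lt := fun κ hκ => by
      simpa only [← valued_algebraMap] using exists_finset_valued_sub_lt v hκ
    exists_le_mul_pow := fun n hn => ⟨π ^ n, pow_ne_zero n hπ₀, fun x hx => by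
      rw [map_pow]
      exact exists_valuation_mul_pow_bounds hπ' hn hx⟩
    le_one_iff := fun x => hensel.valuation_le_one_iff hπ' hq hvq
    pos := by omega }⟩

end Completion

section Separation

open Filter

variable {X : Type*}

theorem exists_ultrafilter_forall_mem {𝒞 : Set (Set X)} (huniv : Set.univ ∈ 𝒞) (hinf : InfClosed 𝒞)
    {B : Set X} (hB : ∀ S ∈ 𝒞, (S ∩ B).Nonempty) :
    ∃ U : Ultrafilter X, B ∈ U ∧ ∀ S ∈ 𝒞, S ∈ U := by
  let F : Filter X :=
    { sets := {A | ∃ S ∈ 𝒞, S ⊆ A}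
      univ_sets := ⟨_, huniv, subset_rfl⟩
      sets_of_superset := fun ⟨S, hS, hSA⟩ h => ⟨S, hS, hSA.trans h⟩
      inter_sets := fun ⟨S, hS, hSA⟩ ⟨T, hT, hTB⟩ =>
        ⟨S ⊓ T, hinf hS hT, Set.inter_subset_inter hSA hTB⟩ }
  have : (F ⊓ 𝓟 B).NeBot := inf_principal_neBot_iff.2 fun A ⟨S, hS, hSA⟩ =>
    (hB S hS).mono (Set.inter_subset_inter_left B hSA)
  refine ⟨.of (F ⊓ 𝓟 B), Ultrafilter.of_le _ (mem_inf_of_right (mem_principal_self B)),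
    fun S hS => Ultrafilter.of_le _ (mem_inf_of_left ⟨S, hS, subset_rfl⟩)⟩

theorem exists_ultrafilter_separating {𝒜 : BooleanSubalgebra (Set X)} {B : Set X} (hB : B ∉ 𝒜) :
    ∃ U V : Ultrafilter X, B ∈ U ∧ B ∉ V ∧ ∀ S ∈ 𝒜, S ∈ U ↔ S ∈ V := by
  obtain ⟨U, hBU, hU⟩ := exists_ultrafilter_forall_mem (𝒞 := {S | S ∈ 𝒜 ∧ Sᶜ ⊆ B}) (B := B)
    ⟨𝒜.top_mem, by simp⟩
    (fun S hS T hT => ⟨𝒜.inf_mem hS.1 hT.1, compl_inf.trans_le (sup_le hS.2 hT.2)⟩)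
    fun S hS => by
      by_contra h
      have : Sᶜ = B := hS.2.antisymm (Set.disjoint_iff_inter_eq_empty.2
        (Set.not_nonempty_iff_eq_empty.1 h)).subset_compl_left
      exact hB (this ▸ 𝒜.compl_mem hS.1)
  obtain ⟨V, hBV, hV⟩ := exists_ultrafilter_forall_mem (𝒞 := {S | S ∈ 𝒜 ∧ S ∈ U}) (B := Bᶜ)
    ⟨𝒜.top_mem, univ_mem⟩ (fun S hS T hT => ⟨𝒜.inf_mem hS.1 hT.1, inter_mem hS.2 hT.2⟩)
    fun S hS => by
      by_contra h
      rw [Set.inter_compl_nonempty_iff, not_not] at h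
      exact Ultrafilter.compl_notMem_iff.2 hS.2 (hU _ ⟨𝒜.compl_mem hS.1, by simpa⟩)
  refine ⟨U, V, hBU, Ultrafilter.compl_mem_iff_notMem.1 hBV, fun S hS =>
    ⟨fun h => hV S ⟨hS, h⟩, fun h => ?_⟩⟩
  by_contra hSU
  exact Ultrafilter.compl_mem_iff_notMem.1
    (hV _ ⟨𝒜.compl_mem hS, Ultrafilter.compl_mem_iff_notMem.2 hSU⟩) h

end Separation

section GenericPoint

open Filter

theorem aeval_optionEquivLeft {R S ι : Type*} [CommRing R] [CommRing S] [Algebra R S]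
    [Algebra (MvPolynomial ι R) S] [IsScalarTower R (MvPolynomial ι R) S] (t : S)
    (f : MvPolynomial (Option ι) R) :
    aeval t (MvPolynomial.optionEquivLeft R ι f) =
      MvPolynomial.aeval
        (fun o => o.elim t fun i => algebraMap (MvPolynomial ι R) S (MvPolynomial.X i)) f := by
  suffices ((aeval t).restrictScalars R).comp (MvPolynomial.optionEquivLeft R ι).toAlgHom =
    MvPolynomial.aeval
      (fun o => o.elim t fun i => algebraMap (MvPolynomial ι R) S (MvPolynomial.X i)) from
    DFunLike.congr_fun this f
  ext o
  cases o <;> simp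

variable {k X K ι : Type*} [Field k] [Field K] [Algebra k K]

theorem aeval_germ_coe (U : Ultrafilter X) (x : ι → X → K) (f : MvPolynomial ι k) :
    MvPolynomial.aeval (fun i => (x i : (U : Filter X).Germ K)) f =
      ((fun a => MvPolynomial.aeval (fun i => x i a) f : X → K) : (U : Filter X).Germ K) := by
  let φ : (X → K) →ₐ[k] (U : Filter X).Germ K :=
    { Germ.coeRingHom (U : Filter X) with commutes' := fun _ => rfl }
  refine (MvPolynomial.comp_aeval_apply x φ f).symm.trans (congrArg φ (funext fun a => ?_))
  exact MvPolynomial.comp_aeval_apply x (Pi.evalAlgHom k (fun _ => K) a) f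

variable {U : Ultrafilter (ι → K)}

/-- An ultrafilter on affine space defines a generic point over the ultrapower, at which
polynomials can be evaluated. -/
noncomputable instance genericAlgebra :
    Algebra (MvPolynomial ι k) ((U : Filter (ι → K)).Germ K) :=
  (MvPolynomial.aeval fun i =>
    ((fun x => x i : (ι → K) → K) : (U : Filter (ι → K)).Germ K)).toAlgebra

instance : IsScalarTower k (MvPolynomial ι k) ((U : Filter (ι → K)).Germ K) :=
  .of_algebraMap_eq fun _ => (MvPolynomial.aeval_C _ _).symm

theorem algebraMap_mvPolynomial_germ (f : MvPolynomial ι k) :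
    algebraMap _ ((U : Filter (ι → K)).Germ K) f =
      ((fun x => MvPolynomial.aeval x f : (ι → K) → K) : (U : Filter (ι → K)).Germ K) :=
  aeval_germ_coe U _ f

theorem aeval_optionEquivLeft_germ (t : (ι → K) → K) (f : MvPolynomial (Option ι) k) :
    aeval (t : (U : Filter (ι → K)).Germ K) (MvPolynomial.optionEquivLeft k ι f) =
      ((fun x => MvPolynomial.aeval (fun o => o.elim (t x) x) f : (ι → K) → K) :
        (U : Filter (ι → K)).Germ K) := by
  have coe_elim (o : Option ι) : o.elim (t : (U : Filter (ι → K)).Germ K)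
      (fun i => algebraMap (MvPolynomial ι k) _ (MvPolynomial.X i)) =
        ((fun x => o.elim (t x) x : (ι → K) → K) : (U : Filter (ι → K)).Germ K) := by
    cases o with
    | none => rfl
    | some i => exact MvPolynomial.aeval_X _ i
  rw [aeval_optionEquivLeft, funext coe_elim]
  exact aeval_germ_coe U (fun (o : Option ι) x => o.elim (t x) x) f

end GenericPoint

/-- The Boolean algebra of subsets of `K ^ ι` generated by the conditions `f(x) ∈ K^{×n}`, for
polynomials `f` over `k`. For `n = 1` the condition is `f(x) ≠ 0`. -/
def powerDefinable (k K ι : Type*) [Field k] [Field K] [Algebra k K] :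
    BooleanSubalgebra (Set (ι → K)) :=
  .closure {A | ∃ (f : MvPolynomial ι k) (n : ℕ), 0 < n ∧
    A = {x | IsNonzeroPow n (MvPolynomial.aeval x f)}}

namespace powerDefinable

open Filter

variable {k K ι κ : Type*} [Field k] [Field K] [Algebra k K]

theorem setOf_isNonzeroPow_mem (f : MvPolynomial ι k) {n : ℕ} (hn : 0 < n) :
    {x | IsNonzeroPow n (MvPolynomial.aeval x f)} ∈ powerDefinable k K ι :=
  BooleanSubalgebra.subset_closure ⟨f, n, hn, rfl⟩

theorem setOf_aeval_eq_zero_mem (f : MvPolynomial ι k) :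
    {x | MvPolynomial.aeval x f = 0} ∈ powerDefinable k K ι := by
  convert BooleanSubalgebra.compl_mem (setOf_isNonzeroPow_mem (K := K) f one_pos)
  ext x
  simp

theorem preimage_comp_mem {A : Set (κ → K)} (hA : A ∈ powerDefinable k K κ) (e : κ → ι) :
    (· ∘ e) ⁻¹' A ∈ powerDefinable k K ι := by
  induction hA using BooleanSubalgebra.closure_bot_sup_induction with
  | mem _ h =>
    obtain ⟨f, n, hn, rfl⟩ := h
    simpa [MvPolynomial.aeval_rename] using setOf_isNonzeroPow_mem (MvPolynomial.rename e f) hn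
  | bot => exact BooleanSubalgebra.bot_mem
  | sup _ _ _ _ ihA ihB => exact BooleanSubalgebra.sup_mem ihA ihB
  | compl _ _ ih => exact BooleanSubalgebra.compl_mem ih

theorem exists_finset_eventually_mem_iff {A : Set (Option ι → K)}
    (hA : A ∈ powerDefinable k K (Option ι)) (U V : Ultrafilter (ι → K)) :
    ∃ (G : Finset (MvPolynomial ι k)[X]) (n : ℕ), 0 < n ∧ ∀ t t' : (ι → K) → K,
      (∀ g ∈ G, ∀ m, m ∣ n → (IsNonzeroPow m (aeval (t : (U : Filter (ι → K)).Germ K) g) ↔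
        IsNonzeroPow m (aeval (t' : (V : Filter (ι → K)).Germ K) g))) →
      ((∀ᶠ x in U, (fun o => o.elim (t x) x) ∈ A) ↔
        ∀ᶠ x in V, (fun o => o.elim (t' x) x) ∈ A) := by
  classical
  induction hA using BooleanSubalgebra.closure_bot_sup_induction with
  | mem _ h =>
    obtain ⟨f, n, hn, rfl⟩ := h
    refine ⟨{MvPolynomial.optionEquivLeft k ι f}, n, hn, fun t t' h => ?_⟩
    have := h _ (Finset.mem_singleton_self _) n dvd_rfl
    rwa [aeval_optionEquivLeft_germ, aeval_optionEquivLeft_germ, isNonzeroPow_coe_iff,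
      isNonzeroPow_coe_iff] at this
  | bot => exact ⟨∅, 1, one_pos, fun t t' _ => by simp [U.neBot.ne, V.neBot.ne]⟩
  | sup A _ B _ ihA ihB =>
    obtain ⟨G, n, hn, h⟩ := ihA
    obtain ⟨G', n', hn', h'⟩ := ihB
    refine ⟨G ∪ G', n * n', Nat.mul_pos hn hn', fun t t' ht => ?_⟩
    simp only [Set.sup_eq_union, Set.mem_union, Ultrafilter.eventually_or]
    rw [h t t' fun g hg m hm => ht g (Finset.mem_union_left _ hg) m (hm.mul_right _),
      h' t t' fun g hg m hm => ht g (Finset.mem_union_right _ hg) m (hm.mul_left _)]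
  | compl _ _ ih =>
    obtain ⟨G, n, hn, h⟩ := ih
    refine ⟨G, n, hn, fun t t' ht => ?_⟩
    simp only [Set.mem_compl_iff, Ultrafilter.eventually_not]
    rw [h t t' ht]

theorem samePowers_germ {U V : Ultrafilter (ι → K)}
    (hUV : ∀ S ∈ powerDefinable k K ι, S ∈ U ↔ S ∈ V) :
    SamePowers (MvPolynomial ι k) ((U : Filter (ι → K)).Germ K)
      ((V : Filter (ι → K)).Germ K) := fun n hn f => by
  rw [algebraMap_mvPolynomial_germ, algebraMap_mvPolynomial_germ, isNonzeroPow_coe_iff,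
    isNonzeroPow_coe_iff]
  exact hUV _ (setOf_isNonzeroPow_mem f hn)

theorem setOf_exists_elim_mem [CharZero k] {Γ : Type*} [LinearOrderedCommGroupWithZero Γ]
    {v : Valuation K Γ} {π : k} {q : ℕ} (hK : IsPadicLike k v π q) {A : Set (Option ι → K)}
    (hA : A ∈ powerDefinable k K (Option ι)) :
    {x : ι → K | ∃ a, (fun o => o.elim a x) ∈ A} ∈ powerDefinable k K ι := by
  by_contra hB
  obtain ⟨U, V, hU, hV, hUV⟩ := exists_ultrafilter_separating hB
  obtain ⟨t, ht⟩ : ∃ t : (ι → K) → K, ∀ᶠ x in U, (fun o => o.elim (t x) x) ∈ A :=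
    skolem.1 hU
  obtain ⟨G, n, hn, hG⟩ := exists_finset_eventually_mem_iff hA U V
  obtain ⟨t', ht'⟩ := hK.germ.exists_transfer hK.germ (samePowers_germ hUV) G hn
    (t : (U : Filter (ι → K)).Germ K)
  induction t' using Germ.inductionOn with | h t'
  have := (hG t t' ht').1 ht
  exact hV (this.mono fun x hx => ⟨t' x, hx⟩)

end powerDefinable

section ModelTheory

universe w

variable {k K : Type*} [Field k] [Field K] [Algebra k K] [Ring.CompatibleRing K]

theorem exists_realize_eq_aeval {α : Type*}
    (t : (Language.ring[[Set.range (algebraMap k K)]]).Term α) :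
    ∃ p : MvPolynomial α k, ∀ x : α → K, t.realize x = MvPolynomial.aeval x p := by
  induction t with
  | var a => exact ⟨MvPolynomial.X a, fun x => by simp⟩
  | @func l f ts ih =>
    choose p hp using ih
    rcases f with f | c
    · cases f with
      | add =>
        refine ⟨p 0 + p 1, fun x => ?_⟩
        exact (Ring.CompatibleRing.funMap_add fun i => (ts i).realize x).trans (by simp [hp])
      | mul =>
        refine ⟨p 0 * p 1, fun x => ?_⟩
        exact (Ring.CompatibleRing.funMap_mul fun i => (ts i).realize x).trans (by simp [hp])
      | neg =>
        refine ⟨-p 0, fun x => ?_⟩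
        exact (Ring.CompatibleRing.funMap_neg fun i => (ts i).realize x).trans (by simp [hp])
      | zero =>
        refine ⟨0, fun x => ?_⟩
        exact (Ring.CompatibleRing.funMap_zero fun i => (ts i).realize x).trans (by simp)
      | one =>
        refine ⟨1, fun x => ?_⟩
        exact (Ring.CompatibleRing.funMap_one fun i => (ts i).realize x).trans (by simp)
    · match l, c with
      | 0, ⟨_, c, rfl⟩ => exact ⟨MvPolynomial.C c, fun x => by simp; rfl⟩
      | _ + 1, c => exact isEmptyElim c

variable (hproj : ∀ {ι : Type w} {A : Set (Option ι → K)}, A ∈ powerDefinable k K (Option ι) →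
  {x : ι → K | ∃ a, (fun o => o.elim a x) ∈ A} ∈ powerDefinable k K ι)

include hproj

theorem setOf_realize_mem_powerDefinable {α : Type w} {m : ℕ}
    (φ : (Language.ring[[Set.range (algebraMap k K)]]).BoundedFormula α m) :
    {x : α ⊕ Fin m → K | φ.Realize (x ∘ Sum.inl) (x ∘ Sum.inr)} ∈
      powerDefinable k K (α ⊕ Fin m) := by
  induction φ with
  | falsum => exact BooleanSubalgebra.bot_mem
  | equal t₁ t₂ =>
    obtain ⟨p, hp⟩ := exists_realize_eq_aeval t₁
    obtain ⟨q, hq⟩ := exists_realize_eq_aeval t₂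
    simpa [Language.BoundedFormula.Realize, hp, hq, sub_eq_zero] using
      powerDefinable.setOf_aeval_eq_zero_mem (K := K) (p - q)
  | rel R => rcases R with R | R <;> exact isEmptyElim R
  | imp φ ψ ih₁ ih₂ => exact BooleanSubalgebra.himp_mem ih₁ ih₂
  | @all m φ ih =>
    let e : α ⊕ Fin (m + 1) → Option (α ⊕ Fin m) :=
      Sum.elim (fun a => some (Sum.inl a)) (Fin.snoc (fun i => some (Sum.inr i)) none)
    have snoc_eq (x : α ⊕ Fin m → K) (a : K) :
        ((fun o : Option (α ⊕ Fin m) => o.elim a x) ∘ e) ∘ Sum.inr = Fin.snoc (x ∘ Sum.inr) a := by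
      funext i
      refine Fin.lastCases ?_ (fun i => ?_) i <;> simp [e]
    convert BooleanSubalgebra.compl_mem
      (hproj (powerDefinable.preimage_comp_mem (BooleanSubalgebra.compl_mem ih) e)) using 1
    ext x
    simp only [Set.mem_ofPred_eq, Set.mem_compl_iff, Set.mem_preimage, not_exists, not_not,
      snoc_eq, Language.BoundedFormula.realize_all]
    rfl

theorem mem_powerDefinable_of_definable {α : Type w} {A : Set (α → K)}
    (hA : (Set.range (algebraMap k K)).Definable Language.ring A) : A ∈ powerDefinable k K α := by
  obtain ⟨φ, rfl⟩ := hA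
  convert powerDefinable.preimage_comp_mem (setOf_realize_mem_powerDefinable hproj φ)
    (Sum.elim id Fin.elim0) using 1
  ext x
  exact iff_of_eq (congrArg (Language.BoundedFormula.Realize φ x) (Subsingleton.elim _ _))

end ModelTheory

section NormalForm

theorem closure_subset_latticeClosure {α : Type*} [BooleanAlgebra α] {s : Set α}
    (hbot : ⊥ ∈ latticeClosure s) (hcompl : ∀ a ∈ s, aᶜ ∈ latticeClosure s) :
    (BooleanSubalgebra.closure s : Set α) ⊆ latticeClosure s := by
  have compl_mem : ∀ a ∈ latticeClosure s, aᶜ ∈ latticeClosure s := fun a ha => by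
    induction ha using latticeClosure_sup_inf_induction with
    | mem a ha => exact hcompl a ha
    | sup a _ b _ iha ihb =>
      rw [compl_sup]
      exact isSublattice_latticeClosure.infClosed iha ihb
    | inf a _ b _ iha ihb =>
      rw [compl_inf]
      exact isSublattice_latticeClosure.supClosed iha ihb
  exact fun a ha => BooleanSubalgebra.closure_bot_sup_induction (fun _ h => subset_latticeClosure h)
    hbot (fun _ _ _ _ h h' => isSublattice_latticeClosure.supClosed h h')
    (fun _ _ => compl_mem _) ha

variable {X : Type*} {𝒮 : Set (Set X)} {A : Set X}

theorem exists_eq_iInter_of_mem_infClosure (hA : A ∈ infClosure 𝒮) :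
    ∃ (t : ℕ) (B : Fin t → Set X), (∀ j, B j ∈ 𝒮) ∧ A = ⋂ j, B j := by
  obtain ⟨F, hF, hF𝒮, rfl⟩ := hA
  refine ⟨F.card, fun j => F.equivFin.symm j, fun j => hF𝒮 (F.equivFin.symm j).2, ?_⟩
  rw [Finset.inf'_eq_inf, Finset.inf_id_set_eq_sInter, Set.sInter_eq_iInter]
  exact (F.equivFin.symm.surjective.iInter_comp fun B => B.1).symm

theorem exists_eq_iUnion_of_mem_supClosure (hA : A ∈ supClosure 𝒮) :
    ∃ (r : ℕ) (B : Fin r → Set X), (∀ i, B i ∈ 𝒮) ∧ A = ⋃ i, B i := by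
  obtain ⟨F, hF, hF𝒮, rfl⟩ := hA
  refine ⟨F.card, fun i => F.equivFin.symm i, fun i => hF𝒮 (F.equivFin.symm i).2, ?_⟩
  rw [Finset.sup'_eq_sup, Finset.sup_id_set_eq_sUnion, Set.sUnion_eq_iUnion]
  exact (F.equivFin.symm.surjective.iUnion_comp fun B => B.1).symm

theorem exists_eq_iUnion_iInter_of_mem_latticeClosure (hA : A ∈ latticeClosure 𝒮) :
    ∃ (r : ℕ) (t : Fin r → ℕ) (B : (i : Fin r) → Fin (t i) → Set X),
      (∀ i j, B i j ∈ 𝒮) ∧ A = ⋃ i, ⋂ j, B i j := by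
  rw [← supClosure_infClosure] at hA
  obtain ⟨r, C, hC, rfl⟩ := exists_eq_iUnion_of_mem_supClosure hA
  choose t B hB hCB using fun i => exists_eq_iInter_of_mem_infClosure (hC i)
  exact ⟨r, t, B, hB, Set.iUnion_congr hCB⟩

end NormalForm

/-- The simple subsets of `K ^ ι`, for an arbitrary extension `K` of `k`. -/
def simpleSets (k K ι : Type*) [Field k] [Field K] [Algebra k K] : Set (Set (ι → K)) :=
  {B | (∃ f : MvPolynomial ι k, B = {x | MvPolynomial.aeval x f = 0}) ∨
    ∃ (f : MvPolynomial ι k) (m : ℕ), 0 < m ∧ B = {x | IsNonzeroPow m (MvPolynomial.aeval x f)}}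

section SimpleSets

variable {k K ι Γ : Type*} [Field k] [Field K] [Algebra k K]

theorem empty_mem_simpleSets : ∅ ∈ simpleSets k K ι :=
  .inl ⟨1, by simp⟩

variable [CharZero k] [LinearOrderedCommGroupWithZero Γ] {v : Valuation K Γ} {π : k} {q : ℕ}

theorem IsPadicLike.exists_finset_not_isNonzeroPow_iff (hK : IsPadicLike k v π q) {m : ℕ}
    (hm : 0 < m) : ∃ T : Finset k, ∀ x : K,
      ¬ IsNonzeroPow m x ↔ x = 0 ∨ ∃ a ∈ T, IsNonzeroPow m (algebraMap k K a * x) := by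
  classical
  obtain ⟨T, hT⟩ := hK.exists_finset_eq_mul_pow hm
  refine ⟨{a ∈ T | ¬ IsNonzeroPow m (algebraMap k K a)}.image (·⁻¹), fun x => ?_⟩
  simp only [Finset.exists_mem_image, Finset.mem_filter]
  constructor
  · refine fun h => or_iff_not_imp_left.2 fun hx => ?_
    obtain ⟨a, haT, y, hy, rfl⟩ := hT x hx
    rw [isNonzeroPow_mul_pow_iff hy] at h
    refine ⟨a, ⟨haT, h⟩, y, hy, ?_⟩
    rw [map_inv₀, inv_mul_cancel_left₀ (left_ne_zero_of_mul hx)]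
  · rintro (rfl | ⟨a, ⟨-, ha⟩, y, hy, hyx⟩)
    · rintro ⟨y, hy, h⟩
      exact pow_ne_zero m hy h
    · have ha₀ : algebraMap k K a⁻¹ ≠ 0 := left_ne_zero_of_mul (hyx ▸ pow_ne_zero m hy)
      rwa [← inv_mul_cancel_left₀ ha₀ x, ← hyx, map_inv₀, inv_inv, isNonzeroPow_mul_pow_iff hy]

theorem compl_mem_latticeClosure_simpleSets (hK : IsPadicLike k v π q) {B : Set (ι → K)}
    (hB : B ∈ simpleSets k K ι) : Bᶜ ∈ latticeClosure (simpleSets k K ι) := by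
  rcases hB with ⟨f, rfl⟩ | ⟨f, m, hm, rfl⟩
  · refine subset_latticeClosure (.inr ⟨f, 1, one_pos, ?_⟩)
    ext x
    simp
  · obtain ⟨T, hT⟩ := hK.exists_finset_not_isNonzeroPow_iff hm
    have compl_eq : {x : ι → K | IsNonzeroPow m (MvPolynomial.aeval x f)}ᶜ =
        {x | MvPolynomial.aeval x f = 0} ∪
          ⋃ a ∈ T, {x | IsNonzeroPow m (MvPolynomial.aeval x (MvPolynomial.C a * f))} := by
      ext x
      simp [hT]
    rw [compl_eq, ← Finset.set_biUnion_coe, Set.biUnion_eq_iUnion]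
    exact isSublattice_latticeClosure.supClosed (subset_latticeClosure (.inl ⟨f, rfl⟩))
      (isSublattice_latticeClosure.supClosed.iSup_mem
        (subset_latticeClosure empty_mem_simpleSets) fun a =>
        subset_latticeClosure (.inr ⟨_, m, hm, rfl⟩))

theorem powerDefinable_subset_latticeClosure (hK : IsPadicLike k v π q) :
    (powerDefinable k K ι : Set (Set (ι → K))) ⊆ latticeClosure (simpleSets k K ι) := by
  refine Set.Subset.trans (BooleanSubalgebra.closure_mono ?_)
    (closure_subset_latticeClosure (subset_latticeClosure empty_mem_simpleSets) fun _ =>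
      compl_mem_latticeClosure_simpleSets hK)
  exact fun _ ⟨f, n, hn, hA⟩ => .inr ⟨f, n, hn, hA⟩

end SimpleSets

theorem definable_eq_union_inter_simple_general {k K ι Γ : Type*} [Field k] [CharZero k] [Field K]
    [Algebra k K] [LinearOrderedCommGroupWithZero Γ] [Ring.CompatibleRing K] {v : Valuation K Γ}
    {π : k} {q : ℕ} (hK : IsPadicLike k v π q) {A : Set (ι → K)}
    (hA : (Set.range (algebraMap k K)).Definable Language.ring A) :
    ∃ (r : ℕ) (t : Fin r → ℕ) (B : (i : Fin r) → Fin (t i) → Set (ι → K)),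
      (∀ i j, B i j ∈ simpleSets k K ι) ∧ A = ⋃ i, ⋂ j, B i j := by
  have hA' : A ∈ powerDefinable k K ι :=
    mem_powerDefinable_of_definable (fun hB => powerDefinable.setOf_exists_elim_mem hK hB) hA
  exact exists_eq_iUnion_iInter_of_mem_latticeClosure (powerDefinable_subset_latticeClosure hK hA')

/-- Every `k`-definable subset of `k_v^n` is a finite union of finite intersections of
simple subsets. -/
theorem definable_eq_union_inter_simple (k : Type*) [Field k] [NumberField k]
    (v : HeightOneSpectrum (NumberField.RingOfIntegers k)) (n : ℕ)
    (A : Set (Fin n → v.adicCompletion k))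
    (hA : @Set.Definable _ (Set.range (algebraMap k (v.adicCompletion k))) Language.ring
      (Ring.compatibleRingOfRing (v.adicCompletion k)).toStructure _ A) :
    ∃ (r : ℕ) (t : Fin r → ℕ) (B : (i : Fin r) → Fin (t i) → Set (Fin n → v.adicCompletion k)),
      (∀ i j, IsSimpleSubset k v n (B i j)) ∧ A = ⋃ i, ⋂ j, B i j := by
  let := Ring.compatibleRingOfRing (v.adicCompletion k)
  obtain ⟨π, q, hK⟩ := exists_isPadicLike_adicCompletion v
  exact definable_eq_union_inter_simple_general hK hA
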